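/- In a finite connected strongly chordal graph G, every vertex that is not simple lies as an internal vertex on an even-chorded path of G whose two endpoints are simple vertices of G. -/

import Mathlib

open SimpleGraph

variable {V : Type*} {W : Type*}

/-- The convex hull of `S`: the smallest convex set containing `S`. -/
def chull (Cvx : Set V → Prop) (S : Set V) : Set V := ⋂₀ {T | S ⊆ T ∧ Cvx T}

/-- The set of extreme vertices of `S`. -/
def extremeSet (Cvx : Set V → Prop) (S : Set V) : Set V := {x | x ∈ S ∧ Cvx (S \ {x})}

/-- A convexity is a convex geometry if every convex set is the convex hull
of its extreme vertices. -/
def IsConvexGeometry (Cvx : Set V → Prop) : Prop :=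
  ∀ S : Set V, Cvx S → S = chull Cvx (extremeSet Cvx S)

/-- Convexity induced by a system of p-walks: `S` is convex iff every vertex
lying on a p-walk between two vertices of `S` belongs to `S`. -/
def PConvex (G : SimpleGraph V) (P : ∀ ⦃u v : V⦄, G.Walk u v → Prop) (S : Set V) : Prop :=
  ∀ ⦃u v : V⦄, u ∈ S → v ∈ S → ∀ w : G.Walk u v, P w → ∀ x ∈ w.support, x ∈ S

/-- `x` and `y` appear consecutively (in either order) in the list `l`. -/
def consecIn (l : List V) (x y : V) : Prop := [x, y] <:+: l ∨ [y, x] <:+: l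

/-- An induced path: a path such that the only edges of `G` between its vertices
are the consecutive ones. -/
def IsInducedPathW (G : SimpleGraph V) {u v : V} (w : G.Walk u v) : Prop :=
  w.IsPath ∧ ∀ x ∈ w.support, ∀ y ∈ w.support, G.Adj x y → consecIn w.support x y

/-- An induced cycle: a cycle such that the only edges of `G` between its vertices
are the consecutive (cyclically) ones. -/
def IsInducedCycleW (G : SimpleGraph V) {u : V} (w : G.Walk u u) : Prop :=
  w.IsCycle ∧ ∀ x ∈ w.support, ∀ y ∈ w.support, G.Adj x y → consecIn w.support x y

/-- A graph is chordal if it has no induced cycle of length at least 4. -/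
def Chordal (G : SimpleGraph V) : Prop :=
  ¬ ∃ (u : V) (w : G.Walk u u), IsInducedCycleW G w ∧ 4 ≤ w.length

/-- The cycle `w` has an odd chord: an edge of `G` joining two vertices of the cycle
whose distance along the cycle is odd and greater than 1. -/
def HasOddChord (G : SimpleGraph V) {u : V} (w : G.Walk u u) : Prop :=
  ∃ i j : ℕ, ∃ hi : i < w.support.length, ∃ hj : j < w.support.length, i < j ∧
    G.Adj (w.support.get ⟨i, hi⟩) (w.support.get ⟨j, hj⟩) ∧
    Odd (min (j - i) (w.length - (j - i))) ∧ 1 < min (j - i) (w.length - (j - i))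

/-- A graph is strongly chordal if it is chordal and every even cycle of length
at least 6 has an odd chord. -/
def StronglyChordal (G : SimpleGraph V) : Prop :=
  Chordal G ∧ ∀ (u : V) (w : G.Walk u u), w.IsCycle → Even w.length → 6 ≤ w.length →
    HasOddChord G w

/-- Closed neighborhood `N[v]`. -/
def closedNbhd (G : SimpleGraph V) (v : V) : Set V := insert v (G.neighborSet v)

/-- A vertex is simple if the closed neighborhoods of its closed neighbors form a
family totally ordered by inclusion. -/
def SimpleVtx (G : SimpleGraph V) (v : V) : Prop :=
  ∀ u ∈ closedNbhd G v, ∀ w ∈ closedNbhd G v,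
    closedNbhd G u ⊆ closedNbhd G w ∨ closedNbhd G w ⊆ closedNbhd G u

/-- A vertex is simplicial if its closed neighborhood is a clique. -/
def SimplicialVtx (G : SimpleGraph V) (v : V) : Prop :=
  G.IsClique (closedNbhd G v)

/-- An even-chorded path: a path with no odd chord and such that no endpoint
lies in a chord. -/
def IsEvenChorded (G : SimpleGraph V) {u v : V} (w : G.Walk u v) : Prop :=
  w.IsPath ∧ ∀ i j : ℕ, ∀ hi : i < w.support.length, ∀ hj : j < w.support.length,
    i + 1 < j → G.Adj (w.support.get ⟨i, hi⟩) (w.support.get ⟨j, hj⟩) →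
      Even (j - i) ∧ 0 < i ∧ j < w.support.length - 1

/-- A tolled walk `u₀u₁…u_k`: `u₀uᵢ ∈ E(G)` implies `i = 1` and `u_ju_k ∈ E(G)`
implies `j = k - 1`. -/
def IsTolledWalk (G : SimpleGraph V) {u v : V} (w : G.Walk u v) : Prop :=
  ∀ i : ℕ, ∀ hi : i < w.support.length,
    (G.Adj u (w.support.get ⟨i, hi⟩) → i = 1) ∧
    (G.Adj (w.support.get ⟨i, hi⟩) v → i = w.support.length - 2)

/-- A weakly toll walk `u₀u₁…u_k`: `u₀uᵢ ∈ E(G)` implies `uᵢ = u₁` and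
`u_ju_k ∈ E(G)` implies `u_j = u_{k-1}`. -/
def IsWeaklyTollWalk (G : SimpleGraph V) {u v : V} (w : G.Walk u v) : Prop :=
  ∀ i : ℕ, ∀ hi : i < w.support.length,
    (G.Adj u (w.support.get ⟨i, hi⟩) → w.support.get ⟨i, hi⟩ = w.support.getD 1 u) ∧
    (G.Adj (w.support.get ⟨i, hi⟩) v → w.support.get ⟨i, hi⟩ = w.support.getD (w.support.length - 2) v)

/-- An interval graph: vertices can be assigned nonempty closed real intervals so that
distinct vertices are adjacent iff the intervals intersect. -/
def IsIntervalGraph (G : SimpleGraph V) : Prop :=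
  ∃ a b : V → ℝ, (∀ v, a v ≤ b v) ∧
    ∀ u v : V, u ≠ v →
      (G.Adj u v ↔ (Set.Icc (a u) (b u) ∩ Set.Icc (a v) (b v)).Nonempty)

/-- A proper interval graph: an interval model in which no interval properly
contains another. -/
def IsProperIntervalGraph (G : SimpleGraph V) : Prop :=
  ∃ a b : V → ℝ, (∀ v, a v ≤ b v) ∧
    (∀ u v : V, u ≠ v →
      (G.Adj u v ↔ (Set.Icc (a u) (b u) ∩ Set.Icc (a v) (b v)).Nonempty)) ∧
    ∀ u v : V, ¬ (Set.Icc (a u) (b u) ⊂ Set.Icc (a v) (b v))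

/-- An end vertex: some interval model in which its interval is an end interval. -/
def IsEndVertex (G : SimpleGraph V) (x : V) : Prop :=
  ∃ a b : V → ℝ, (∀ v, a v ≤ b v) ∧
    (∀ u v : V, u ≠ v →
      (G.Adj u v ↔ (Set.Icc (a u) (b u) ∩ Set.Icc (a v) (b v)).Nonempty)) ∧
    ((∀ v, a x ≤ a v) ∨ (∀ v, b v ≤ b x))

/-- `G` contains an induced subgraph isomorphic to `H`. -/
def HasInducedSubgraphIso (G : SimpleGraph V) (H : SimpleGraph W) : Prop :=
  ∃ f : W ↪ V, ∀ a b : W, G.Adj (f a) (f b) ↔ H.Adj a b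

def gemGraph : SimpleGraph (Fin 5) :=
  SimpleGraph.fromRel fun a b =>
    ((a : ℕ), (b : ℕ)) ∈ [(0,1),(1,2),(2,3),(4,0),(4,1),(4,2),(4,3)]

def houseGraph : SimpleGraph (Fin 5) :=
  SimpleGraph.fromRel fun a b =>
    ((a : ℕ), (b : ℕ)) ∈ [(0,1),(1,2),(2,3),(0,3),(0,4),(1,4)]

def dominoGraph : SimpleGraph (Fin 6) :=
  SimpleGraph.fromRel fun a b =>
    ((a : ℕ), (b : ℕ)) ∈ [(0,1),(1,2),(2,3),(0,3),(2,4),(4,5),(3,5)]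

def aGraph : SimpleGraph (Fin 6) :=
  SimpleGraph.fromRel fun a b =>
    ((a : ℕ), (b : ℕ)) ∈ [(0,1),(1,2),(2,3),(0,3),(2,4),(3,5)]

/-- A triangle path: a path such that any two of its vertices at distance
greater than 2 along the path are non-adjacent in `G`. -/
def IsTrianglePath (G : SimpleGraph V) {u v : V} (w : G.Walk u v) : Prop :=
  w.IsPath ∧ ∀ i j : ℕ, ∀ hi : i < w.support.length, ∀ hj : j < w.support.length,
    i + 2 < j → ¬ G.Adj (w.support.get ⟨i, hi⟩) (w.support.get ⟨j, hj⟩)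

/-- `S` is `H`-free convex. -/
def HFreeConvex [Fintype W] (G : SimpleGraph V) (H : SimpleGraph W) (S : Set V) : Prop :=
  ∀ (S' : Finset V), ↑S' ⊆ S → S'.card = Fintype.card W - 1 →
    ∀ x : V, Nonempty ((G.induce (↑S' ∪ {x} : Set V)) ≃g H) → x ∈ S

/-- `a b c d` is an induced path on four vertices of `G`. -/
def InducedP4 (G : SimpleGraph V) (a b c d : V) : Prop :=
  G.Adj a b ∧ G.Adj b c ∧ G.Adj c d ∧ ¬ G.Adj a c ∧ ¬ G.Adj a d ∧ ¬ G.Adj b d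

/-- Every connected component of `G` is a star. -/
def StarForest (G : SimpleGraph V) : Prop :=
  ∀ v : V, ∃ c : V, G.Reachable v c ∧ (∀ x, G.Reachable c x → x ≠ c → G.Adj c x) ∧
    ∀ x y, G.Adj c x → G.Adj c y → ¬ G.Adj x y

/-- An induced `n`-gem in `G`: `x 0, …, x n` is an induced path and `u` is adjacent
to all of them, the whole forming an induced subgraph of `G`. -/
def IsInducedNGem (G : SimpleGraph V) (n : ℕ) (x : Fin (n + 1) → V) (u : V) : Prop :=
  Function.Injective x ∧ (∀ i, x i ≠ u) ∧
  (∀ i j, G.Adj (x i) (x j) ↔ ((i : ℕ) + 1 = (j : ℕ) ∨ (j : ℕ) + 1 = (i : ℕ))) ∧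
  (∀ i, G.Adj u (x i))

/-- The induced `n`-gem is solved: there is an induced path of length 3 in `G`
connecting `x 0` and `x n` that avoids `u`. -/
def GemSolved (G : SimpleGraph V) (n : ℕ) (x : Fin (n + 1) → V) (u : V) : Prop :=
  ∃ w : G.Walk (x 0) (x (Fin.last n)), IsInducedPathW G w ∧ w.length = 3 ∧ u ∉ w.support

/-!
The closed neighbourhoods of a strongly chordal graph form a totally balanced hypergraph, since a
special cycle of the hypergraph is an even closed walk without odd chords. Simple vertices are the
nest points of this hypergraph, so if `v` is not simple, it lies in two incomparable hyperedges
`y` and `z`; choose them with `y ∩ z` maximal. Removing `y ∩ z` separates `y \ z` from `z \ y`, and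
no vertex on one side has a closed neighbour on the other. By induction, applied to the traces of
the hyperedges on one side together with `y ∩ z`, each side contains a nest point.

A shortest chain of hyperedges from the simple vertices of one side to `v` unfolds to a sequence of
vertices in which terms at odd distance are equal or adjacent only if they are consecutive. Joining
the sequences of both sides at `v` preserves this, and deleting repetitions turns the result into an
even-chorded path: chordality excludes chords spanning a repetition, and the simplicity of the ends
excludes chords there.
-/

/-! ### Closed neighbourhoods -/

section ClosedNbhd

variable {G : SimpleGraph V} {x y : V}

theorem mem_closedNbhd_iff : x ∈ closedNbhd G y ↔ x = y ∨ G.Adj y x := Iff.rfl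

theorem self_mem_closedNbhd : x ∈ closedNbhd G x := Or.inl rfl

theorem mem_closedNbhd_comm : x ∈ closedNbhd G y ↔ y ∈ closedNbhd G x := by
  rw [mem_closedNbhd_iff, mem_closedNbhd_iff, eq_comm, G.adj_comm]

theorem adj_of_mem_closedNbhd (h : x ∈ closedNbhd G y) (hne : y ≠ x) : G.Adj y x :=
  h.resolve_left hne.symm

end ClosedNbhd

/-! ### Shortest chains -/

section ShortestChain

variable {α : Type*} {E : α → α → Prop} {P Q : Set α}

/-- The sequence `q 0, …, q n` is a chain of the relation `E` leading from `P` to `Q` which admits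
no shortcut. The terms of `q` beyond `n` are irrelevant. -/
structure IsShortestChain (E : α → α → Prop) (P Q : Set α) (q : ℕ → α) (n : ℕ) : Prop where
  source : q 0 ∈ P
  target : q n ∈ Q
  step : ∀ i < n, E (q i) (q (i + 1))
  no_shortcut : ∀ i j, i + 1 < j → j ≤ n → ¬ E (q i) (q j)
  source_only : ∀ i, 0 < i → i ≤ n → q i ∉ P
  target_only : ∀ i < n, q i ∉ Q

theorem exists_isShortestChain {a b : α} (ha : a ∈ P) (hb : b ∈ Q)
    (hab : Relation.ReflTransGen E a b) : ∃ q n, IsShortestChain E P Q q n := by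
  classical
  let Reaches (k : ℕ) (x : α) : Prop :=
    ∃ q : ℕ → α, q 0 = x ∧ q k ∈ Q ∧ ∀ i < k, E (q i) (q (i + 1))
  have reaches_cons {k x y} (hxy : E x y) : Reaches k y → Reaches (k + 1) x := by
    rintro ⟨q, rfl, hq, hstep⟩
    refine ⟨fun i => i.casesOn x q, rfl, hq, ?_⟩
    rintro (_ | i) hi
    exacts [hxy, hstep i (by omega)]
  have exists_reaches : ∃ k, ∃ x ∈ P, Reaches k x := by
    suffices ∃ k, Reaches k a from this.imp fun k hk => ⟨a, ha, hk⟩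
    clear ha
    induction hab using Relation.ReflTransGen.head_induction_on with
    | refl => exact ⟨0, fun _ => b, rfl, hb, by simp⟩
    | head hxy _ ih => exact ih.imp' _ fun k => reaches_cons hxy
  obtain ⟨x, hx, q, rfl, hQ, hstep⟩ := Nat.find_spec exists_reaches
  have minimal : ∀ k, ∀ x ∈ P, Reaches k x → Nat.find exists_reaches ≤ k :=
    fun k x hx hk => Nat.find_min' exists_reaches ⟨x, hx, hk⟩
  generalize Nat.find exists_reaches = n at hQ hstep minimal
  have le_of_reaches : ∀ i ≤ n, ∀ k, Reaches k (q i) → n ≤ i + k := by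
    intro i
    induction i with
    | zero => exact fun _ k hk => by simpa using minimal k _ hx hk
    | succ i ih =>
      intro hi k hk
      have := ih (by omega) _ (reaches_cons (hstep i hi) hk)
      omega
  have reaches_drop : ∀ i ≤ n, Reaches (n - i) (q i) := fun i hi =>
    ⟨fun k => q (i + k), rfl, by simpa [hi] using hQ, fun k hk => hstep (i + k) (by omega)⟩
  refine ⟨q, n, hx, hQ, hstep, fun i j hij hj hE => ?_, fun i hi hin hP => ?_, fun i hi hQi => ?_⟩
  · have := le_of_reaches i (by omega) _ (reaches_cons hE (reaches_drop j hj))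
    omega
  · have := minimal _ _ hP (reaches_drop i hin)
    omega
  · have := le_of_reaches i hi.le 0 ⟨fun _ => q i, rfl, hQi, by simp⟩
    omega

theorem IsShortestChain.ne {q : ℕ → α} {n i j : ℕ} (hq : IsShortestChain E P Q q n) (hij : i < j)
    (hj : j ≤ n) : q i ≠ q j := by
  intro h
  rcases hj.eq_or_lt with rfl | hjn
  · exact hq.target_only i hij (h ▸ hq.target)
  · exact hq.no_shortcut i (j + 1) (by omega) hjn (h ▸ hq.step j hjn)

theorem IsShortestChain.mem_iff {q : ℕ → α} {s : ℕ → Set α} {n i j : ℕ}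
    (hq : IsShortestChain E P Q q n) (hs : ∀ j < n, q j ∈ s j ∧ q (j + 1) ∈ s j)
    (hE : ∀ j < n, ∀ i k, i < k → k ≤ n → q i ∈ s j → q k ∈ s j → E (q i) (q k))
    (hi : i ≤ n) (hj : j < n) : q i ∈ s j ↔ i = j ∨ i = j + 1 := by
  refine ⟨fun hij => ?_, ?_⟩
  · by_contra! hne
    rcases lt_or_gt_of_ne hne.1 with h | h
    · exact hq.no_shortcut i (j + 1) (by omega) hj (hE j hj _ _ (by omega) hj hij (hs j hj).2)
    · exact hq.no_shortcut j i (by omega) hi (hE j hj _ _ h hi (hs j hj).1 hij)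
  · rintro (rfl | rfl)
    exacts [(hs i hj).1, (hs j hj).2]

end ShortestChain

/-! ### Walks along sequences -/

section WalkOfSeq

variable {G : SimpleGraph V}

theorem exists_walk_of_seq (p : ℕ → V) (n : ℕ) (hp : ∀ i < n, G.Adj (p i) (p (i + 1))) :
    ∃ w : G.Walk (p 0) (p n), w.support = (List.range (n + 1)).map p := by
  induction n with
  | zero => exact ⟨.nil, by simp⟩
  | succ n ih =>
    obtain ⟨w, hw⟩ := ih fun i hi => hp i (by omega)
    refine ⟨w.concat (hp n n.lt_succ_self), ?_⟩
    rw [Walk.support_concat, hw, List.range_succ (n := n + 1)]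
    simp

theorem mem_edges_of_support_eq {p : ℕ → V} {n i : ℕ} {a b : V} {w : G.Walk a b}
    (hw : w.support = (List.range (n + 1)).map p) (hi : i < n) : s(p i, p (i + 1)) ∈ w.edges := by
  refine Walk.infix_support_iff_mem_edges.mp (.inl (List.infix_iff_getElem?.mpr ⟨i, ?_, ?_⟩))
  · simp only [List.length_cons, List.length_nil, hw, List.length_map, List.length_range]
    omega
  · rintro (_ | _ | k) hk
    · simp [hw, hi.le]
    · simp [hw, hi, add_comm]
    · simp at hk

theorem isPath_of_support_eq {p : ℕ → V} {n : ℕ} {a b : V} {w : G.Walk a b}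
    (hw : w.support = (List.range (n + 1)).map p) (hne : ∀ i j, i < j → j ≤ n → p i ≠ p j) :
    w.IsPath := by
  rw [Walk.isPath_def, hw]
  refine List.nodup_range.map_on fun i hi j hj h => ?_
  rw [List.mem_range, Nat.lt_succ_iff] at hi hj
  rcases lt_trichotomy i j with hij | hij | hij
  exacts [absurd h (hne i j hij hj), hij, absurd h.symm (hne j i hij hi)]

theorem exists_isCycle_of_seq {p : ℕ → V} {n : ℕ} (hn : 3 ≤ n)
    (hadj : ∀ i < n, G.Adj (p i) (p (i + 1))) (hclosed : p n = p 0)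
    (hinj : Set.InjOn p (Set.Iio n)) :
    ∃ w : G.Walk (p 0) (p 0), w.IsCycle ∧ w.support = (List.range (n + 1)).map p := by
  obtain ⟨w, hw⟩ := exists_walk_of_seq p n hadj
  refine ⟨w.copy rfl hclosed, ?_, by simpa using hw⟩
  have hlen : w.length + 1 = n + 1 := by rw [← w.length_support, hw]; simp
  rw [Walk.isCycle_iff_isPath_tail_and_le_length, Walk.isPath_def,
    Walk.support_tail_of_not_nil _ (by rw [Walk.not_nil_iff_lt_length, Walk.length_copy]; omega)]
  refine ⟨?_, by rw [Walk.length_copy]; omega⟩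
  have hperm : ((w.copy rfl hclosed).support.tail).Perm ((List.range n).map p) := by
    rw [Walk.support_copy, hw, List.range_succ_eq_map, List.map_cons, List.tail_cons,
      ← List.perm_cons (p 0), ← List.map_cons (f := p), ← List.range_succ_eq_map, List.range_succ,
      List.map_append, List.map_singleton, hclosed]
    exact List.perm_append_singleton _ _
  exact hperm.nodup_iff.mpr <| List.nodup_range.map_on fun i hi j hj h =>
    hinj (List.mem_range.mp hi) (List.mem_range.mp hj) h

theorem exists_walk_of_mem_closedNbhd (p : ℕ → V) {a b : ℕ} (hab : a ≤ b)
    (hp : ∀ i, a ≤ i → i < b → p (i + 1) ∈ closedNbhd G (p i)) :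
    ∃ w : G.Walk (p a) (p b), ∀ x ∈ w.support, ∃ i, a ≤ i ∧ i ≤ b ∧ p i = x := by
  induction b, hab using Nat.le_induction with
  | base => exact ⟨.nil, by simpa using ⟨a, by simp⟩⟩
  | succ b hab ih =>
    obtain ⟨w, hw⟩ := ih fun i hi hib => hp i hi (by omega)
    have hw' : ∀ x ∈ w.support, ∃ i, a ≤ i ∧ i ≤ b + 1 ∧ p i = x := fun x hx =>
      (hw x hx).imp fun i hi => ⟨hi.1, by omega, hi.2.2⟩
    rcases hp b hab b.lt_succ_self with heq | hadj
    · exact ⟨w.copy rfl heq.symm, by simpa using hw'⟩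
    · refine ⟨w.concat ((G.mem_neighborSet ..).mp hadj), fun x hx => ?_⟩
      rw [Walk.support_concat, List.mem_append, List.mem_singleton] at hx
      exact hx.elim (hw' x) fun h => ⟨b + 1, by omega, le_rfl, h.symm⟩

end WalkOfSeq

/-! ### Separation in chordal graphs -/

section Chordal

variable {G : SimpleGraph V} {u v a b : V}

theorem isInducedCycleW_iff {w : G.Walk u u} :
    IsInducedCycleW G w ↔ w.IsCycle ∧ w.IsChordless := by
  simp only [IsInducedCycleW, Walk.isChordless_iff_forall_mem_edges, consecIn,
    Walk.infix_support_iff_mem_edges]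
  exact and_congr_right fun _ => ⟨fun h x y hx hy => h x hx y hy, fun h x hx y hy => h hx hy⟩

theorem exists_isPath_isChordless (w : G.Walk a b) :
    ∃ w' : G.Walk a b, w'.IsPath ∧ w'.IsChordless ∧ w'.support ⊆ w.support := by
  have hab : Relation.ReflTransGen (fun x y => G.Adj x y ∧ y ∈ w.support) a b := by
    induction w with
    | nil => exact .refl
    | cons h w ih =>
      exact .head ⟨h, by simp⟩
        (Relation.ReflTransGen.mono (fun x y hxy => ⟨hxy.1, by simp [hxy.2]⟩) _ _ ih)
  obtain ⟨q, n, hq⟩ := exists_isShortestChain (Set.mem_singleton a) (Set.mem_singleton b) hab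
  have hqw : ∀ i ≤ n, q i ∈ w.support := by
    rintro (_ | i) hi
    · exact hq.source ▸ w.start_mem_support
    · exact (hq.step i hi).2
  obtain ⟨w', hw'⟩ := exists_walk_of_seq q n fun i hi => (hq.step i hi).1
  obtain rfl : q 0 = a := hq.source
  obtain rfl : q n = b := hq.target
  have consecutive : ∀ i j, i < j → j ≤ n → G.Adj (q i) (q j) → s(q i, q j) ∈ w'.edges := by
    intro i j hij hj hadj
    obtain rfl : j = i + 1 := by
      by_contra hne
      exact hq.no_shortcut i j (by omega) hj ⟨hadj, hqw j hj⟩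
    exact mem_edges_of_support_eq hw' hj
  refine ⟨w', isPath_of_support_eq hw' fun i j hij hj => hq.ne hij hj, ?_, ?_⟩
  · rw [Walk.isChordless_iff_forall_mem_edges]
    simp only [hw', List.mem_map, List.mem_range, Nat.lt_succ_iff]
    rintro _ _ ⟨i, hi, rfl⟩ ⟨j, hj, rfl⟩ hadj
    rcases lt_trichotomy i j with hij | rfl | hij
    · exact consecutive i j hij hj hadj
    · exact absurd hadj G.irrefl
    · exact Sym2.eq_swap ▸ consecutive j i hij hi hadj.symm
  · simpa [hw', List.subset_def] using fun i hi => hqw i (Nat.lt_succ_iff.mp hi)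

theorem isInducedCycleW_cons_concat {w : G.Walk a b} (hw : w.IsPath) (hchordless : w.IsChordless)
    (hab : a ≠ b) (hv : v ∉ w.support) (hva : G.Adj v a) (hvb : G.Adj v b)
    (honly : ∀ x ∈ w.support, G.Adj v x → x = a ∨ x = b) :
    IsInducedCycleW G (Walk.cons hva (w.concat hvb.symm)) := by
  rw [isInducedCycleW_iff, Walk.cons_isCycle_iff, Walk.isChordless_iff_forall_mem_edges]
  refine ⟨⟨hw.concat hv hvb.symm, ?_⟩, fun x y hx hy hxy => ?_⟩
  · rw [Walk.edges_concat, List.concat_eq_append, List.mem_append, List.mem_singleton]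
    rintro (h | h)
    · exact hv (w.fst_mem_support_of_mem_edges h)
    · grind
  · simp only [Walk.support_cons, Walk.support_concat, List.mem_cons, List.mem_append,
      List.not_mem_nil, or_false, Walk.edges_cons, Walk.edges_concat,
      List.concat_eq_append] at hx hy ⊢
    have := @hchordless.mem_edges
    grind [G.irrefl, G.adj_comm]

theorem Chordal.exists_mem_support_closedNbhd (hG : Chordal G) (ha : a ∈ closedNbhd G v)
    (hb : b ∈ closedNbhd G v) (hab : a ∉ closedNbhd G b) (w : G.Walk a b) :
    ∃ x ∈ w.support, x ≠ a ∧ x ≠ b ∧ x ∈ closedNbhd G v := by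
  by_contra! hsep
  obtain ⟨w', hpath, hchordless, hsub⟩ := exists_isPath_isChordless w
  have hva : G.Adj v a := adj_of_mem_closedNbhd ha fun h => hab (mem_closedNbhd_comm.mp (h ▸ hb))
  have hvb : G.Adj v b := adj_of_mem_closedNbhd hb fun h => hab (h ▸ ha)
  have hv : v ∉ w'.support := fun h => hsep v (hsub h) hva.ne hvb.ne self_mem_closedNbhd
  refine hG ⟨v, _, isInducedCycleW_cons_concat hpath hchordless ?_ hv hva hvb ?_, ?_⟩
  · exact fun h => hab (h ▸ self_mem_closedNbhd)
  · intro x hx hvx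
    by_contra! hne
    exact hsep x (hsub hx) hne.1 hne.2 (.inr hvx)
  · have : 2 ≤ w'.length := by
      by_contra! hlen
      interval_cases h : w'.length
      · exact hab (.inl (w'.eq_of_length_eq_zero h))
      · exact hab (.inr (w'.adj_of_length_eq_one h).symm)
    rw [Walk.length_cons, Walk.length_concat]
    omega

end Chordal
/-! ### Totally balanced hypergraphs -/

section Hypergraph

variable {α : Type*} {𝓗 𝓚 : Set (Set α)} {C s t y z X : Set α} {a b : α}

/-- A hypergraph, given by its set of hyperedges, is totally balanced if it has no special cycle:
no cyclic sequence `s 0, x 0, s 1, x 1, …, s (n - 1), x (n - 1)` of `n ≥ 3` hyperedges and points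
in which `x i` lies in `s i`, in the cyclically next hyperedge, and in no other. -/
def IsTotallyBalanced (𝓗 : Set (Set α)) : Prop :=
  ∀ n ≥ 3, ∀ (x : ℕ → α) (s : ℕ → Set α), (∀ j < n, s j ∈ 𝓗) →
    ¬ ∀ i < n, ∀ j < n, x i ∈ s j ↔ j = i ∨ j = i + 1 ∨ i + 1 = n ∧ j = 0

/-- A nest point of a hypergraph: the hyperedges containing it are totally ordered by inclusion. -/
def IsNestPoint (𝓗 : Set (Set α)) (a : α) : Prop :=
  IsChain (· ⊆ ·) {s ∈ 𝓗 | a ∈ s}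

/-- The traces of the hyperedges of a hypergraph on a set of points. -/
def trace (𝓗 : Set (Set α)) (X : Set α) : Set (Set α) := (· ∩ X) '' 𝓗

/-- Two points outside `C` are linked if some hyperedge not covering `C` contains both. -/
def Linked (𝓗 : Set (Set α)) (C : Set α) (a b : α) : Prop :=
  a ∉ C ∧ b ∉ C ∧ ∃ t ∈ 𝓗, ¬ C ⊆ t ∧ a ∈ t ∧ b ∈ t

/-- The side of `y` facing away from `z`: the points linked to `y \ z` when `y ∩ z` is removed. -/
def side (𝓗 : Set (Set α)) (y z : Set α) : Set α :=
  {a | ∃ p ∈ y \ z, Relation.ReflTransGen (Linked 𝓗 (y ∩ z)) p a}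

/-- Two incomparable hyperedges of a hypergraph whose intersection is maximal among the
intersections of pairs of incomparable hyperedges. -/
structure IsMaximalCross (𝓗 : Set (Set α)) (y z : Set α) : Prop where
  left_mem : y ∈ 𝓗
  right_mem : z ∈ 𝓗
  incomp : IncompRel (· ⊆ ·) y z
  eq_of_subset : ∀ s ∈ 𝓗, ∀ t ∈ 𝓗, IncompRel (· ⊆ ·) s t → y ∩ z ⊆ s ∩ t → s ∩ t = y ∩ z

/-- Every hyperedge other than the full one misses some nest point. -/
def HasNestPoints (𝓗 : Set (Set α)) : Prop :=
  ∀ t ∈ 𝓗, ¬ ⋃₀ 𝓗 ⊆ t → ∃ a ∈ ⋃₀ 𝓗, a ∉ t ∧ IsNestPoint 𝓗 a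

theorem IsTotallyBalanced.mono (h𝓗 : IsTotallyBalanced 𝓗) (h : 𝓚 ⊆ 𝓗) : IsTotallyBalanced 𝓚 :=
  fun n hn x s hs => h𝓗 n hn x s fun j hj => h (hs j hj)

protected theorem IsTotallyBalanced.trace (h𝓗 : IsTotallyBalanced 𝓗) (X : Set α) :
    IsTotallyBalanced (trace 𝓗 X) := by
  intro n hn x s hs hcycle
  choose! t ht htX using hs
  have hxX : ∀ i < n, x i ∈ X := fun i hi =>
    ((htX i hi).symm ▸ (hcycle i hi i hi).mpr (.inl rfl) : x i ∈ (· ∩ X) (t i)).2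
  refine h𝓗 n hn x t ht fun i hi j hj => ?_
  rw [← hcycle i hi j hj, ← htX j hj]
  exact ⟨fun h => ⟨h, hxX i hi⟩, And.left⟩

theorem linked_comm : Linked 𝓗 C a b ↔ Linked 𝓗 C b a := by
  simp only [Linked]
  grind

theorem diff_subset_side : y \ z ⊆ side 𝓗 y z := fun a ha => ⟨a, ha, .refl⟩

theorem notMem_inter_of_mem_side (ha : a ∈ side 𝓗 y z) : a ∉ y ∩ z := by
  obtain ⟨p, hp, hpa⟩ := ha
  rcases hpa.cases_tail with rfl | ⟨b, -, hba⟩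
  exacts [fun h => hp.2 h.2, hba.2.1]

theorem mem_side_of_linked (ha : a ∈ side 𝓗 y z) (hab : Linked 𝓗 (y ∩ z) a b) :
    b ∈ side 𝓗 y z := by
  obtain ⟨p, hp, hpa⟩ := ha
  exact ⟨p, hp, hpa.tail hab⟩

theorem mem_side_of_mem (hs : s ∈ 𝓗) (hC : ¬ y ∩ z ⊆ s) (has : a ∈ s) (hbs : b ∈ s)
    (ha : a ∈ side 𝓗 y z) (hb : b ∉ y ∩ z) : b ∈ side 𝓗 y z :=
  mem_side_of_linked ha ⟨notMem_inter_of_mem_side ha, hb, s, hs, hC, has, hbs⟩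

theorem IsTotallyBalanced.inter_subset_of_path (h𝓗 : IsTotallyBalanced 𝓗) {q : ℕ → α}
    {s : ℕ → Set α} {n : ℕ} (hn : 0 < n) (hs : ∀ j ≤ n, s j ∈ 𝓗)
    (hqs : ∀ i < n, ∀ j ≤ n, q i ∈ s j ↔ j = i ∨ j = i + 1) : s 0 ∩ s n ⊆ s 1 := by
  classical
  rintro c ⟨hc0, hcn⟩
  by_contra hc1
  have hex : ∃ j, 0 < j ∧ c ∈ s j := ⟨n, hn, hcn⟩
  obtain ⟨hj, hcj⟩ := Nat.find_spec hex
  have hjn : Nat.find hex ≤ n := Nat.find_min' hex ⟨hn, hcn⟩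
  have hmin : ∀ k < Nat.find hex, 0 < k → c ∉ s k :=
    fun k hk hk0 hck => Nat.find_min hex hk ⟨hk0, hck⟩
  generalize Nat.find hex = j at *
  have hj1 : j ≠ 1 := by rintro rfl; exact hc1 hcj
  refine h𝓗 (j + 1) (by omega) (fun i => if i < j then q i else c) s
    (fun k hk => hs k (by omega)) fun i hi k hk => ?_
  split_ifs with hij
  · rw [hqs i (by omega) k (by omega)]; omega
  · obtain rfl : i = j := by omega
    rcases Nat.eq_zero_or_pos k with rfl | hk0
    · simpa using hc0
    · rcases (Nat.lt_succ_iff.mp hk).eq_or_lt with rfl | hki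
      · simpa using hcj
      · simpa [hmin k hki hk0] using by omega

/- Otherwise a shortest chain of hyperedges from `y \ z` to `z \ y`, preceded by `y` and followed by
`z`, would be a path whose first link contains `y ∩ z`. -/
theorem IsTotallyBalanced.disjoint_side (h𝓗 : IsTotallyBalanced 𝓗) (hy : y ∈ 𝓗) (hz : z ∈ 𝓗) :
    Disjoint (side 𝓗 y z) (side 𝓗 z y) := by
  rw [Set.disjoint_left]
  rintro a ⟨p, hp, hpa⟩ ⟨p', hp', hpa'⟩
  rw [Set.inter_comm z y] at hpa'
  have : Std.Symm (Linked 𝓗 (y ∩ z)) := ⟨fun _ _ => linked_comm.mp⟩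
  obtain ⟨q, n, hq⟩ := exists_isShortestChain hp hp' (hpa.trans (symm hpa'))
  have hn : n ≠ 0 := by rintro rfl; exact hq.source.2 hq.target.1
  choose! t ht𝓗 hCt hqt hqt' using fun i hi => (hq.step i hi).2.2
  have hqC : ∀ i ≤ n, q i ∉ y ∩ z := fun i hi h => by
    rcases hi.lt_or_eq with hi | rfl
    exacts [(hq.step i hi).1 h, hq.target.2 h.1]
  have hmem : ∀ i ≤ n, ∀ j < n, q i ∈ t j ↔ i = j ∨ i = j + 1 := fun i hi j hj =>
    hq.mem_iff (fun j hj => ⟨hqt j hj, hqt' j hj⟩)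
      (fun j hj i k hik hk hi hk' => ⟨hqC i (by omega), hqC k hk, t j, ht𝓗 j hj, hCt j hj, hi, hk'⟩)
      hi hj
  let s (j : ℕ) : Set α := if j = 0 then y else if j ≤ n then t (j - 1) else z
  have hsub : s 0 ∩ s (n + 1) ⊆ s 1 := by
    refine h𝓗.inter_subset_of_path (q := q) n.succ_pos (fun j _ => ?_) fun i hi j hj => ?_
    · simp only [s]
      split_ifs
      exacts [hy, ht𝓗 _ (by omega), hz]
    · rw [Nat.lt_succ_iff] at hi
      simp only [s]
      split_ifs with hj0 hjn
      · have := hq.source_only i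
        have := hqC i hi
        have := hq.source
        grind
      · rw [hmem i hi _ (by omega)]; omega
      · have := hq.target_only i
        have := hqC i hi
        have := hq.target
        grind
  exact hCt 0 (by omega) (by simpa [s, Nat.one_le_iff_ne_zero.mpr hn] using hsub)

theorem IsMaximalCross.symm (h : IsMaximalCross 𝓗 y z) : IsMaximalCross 𝓗 z y :=
  ⟨h.right_mem, h.left_mem, h.incomp.symm, Set.inter_comm y z ▸ h.eq_of_subset⟩

theorem exists_isMaximalCross (h𝓗 : 𝓗.Finite) (hs : s ∈ 𝓗) (ht : t ∈ 𝓗)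
    (hst : IncompRel (· ⊆ ·) s t) : ∃ y z, IsMaximalCross 𝓗 y z ∧ s ∩ t ⊆ y ∩ z := by
  let crosses : Set (Set α) := {C | ∃ s ∈ 𝓗, ∃ t ∈ 𝓗, IncompRel (· ⊆ ·) s t ∧ s ∩ t = C}
  have hfin : crosses.Finite := (h𝓗.image2 (· ∩ ·) h𝓗).subset <| by
    rintro _ ⟨s, hs, t, ht, -, rfl⟩
    exact ⟨s, hs, t, ht, rfl⟩
  obtain ⟨_, hle, ⟨y, hy, z, hz, hyz, rfl⟩, hmax⟩ :=
    hfin.exists_le_maximal (a := s ∩ t) ⟨s, hs, t, ht, hst, rfl⟩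
  exact ⟨y, z, ⟨hy, hz, hyz, fun s hs t ht hst h => (hmax ⟨s, hs, t, ht, hst, rfl⟩ h).antisymm h⟩,
    hle⟩

theorem IsMaximalCross.diff_nonempty (h : IsMaximalCross 𝓗 y z) : (y \ z).Nonempty :=
  Set.sdiff_nonempty.mpr h.incomp.1

theorem side_subset_sUnion (hy : y ∈ 𝓗) : side 𝓗 y z ⊆ ⋃₀ 𝓗 := by
  rintro a ⟨p, hp, hpa⟩
  rcases hpa.cases_tail with rfl | ⟨b, -, -, -, t, ht, -, -, hat⟩
  exacts [⟨y, hy, hp.1⟩, ⟨t, ht, hat⟩]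

theorem subset_inter_union_side (hs : s ∈ 𝓗) (hC : ¬ y ∩ z ⊆ s) (has : a ∈ s)
    (ha : a ∈ side 𝓗 y z) : s ⊆ y ∩ z ∪ side 𝓗 y z :=
  fun _ hb => or_iff_not_imp_left.mpr (mem_side_of_mem hs hC has hb ha)

theorem IsMaximalCross.isNestPoint_of_trace (h : IsMaximalCross 𝓗 y z) (ha : a ∈ side 𝓗 y z)
    (hnest : IsNestPoint (trace 𝓗 (y ∩ z ∪ side 𝓗 y z)) a) : IsNestPoint 𝓗 a := by
  set X := y ∩ z ∪ side 𝓗 y z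
  have haX : a ∈ X := .inr ha
  have hCX : y ∩ z ⊆ X := Set.subset_union_left
  have subset_X : ∀ {s}, s ∈ 𝓗 → a ∈ s → ¬ y ∩ z ⊆ s → s ⊆ X := fun hs has hC =>
    subset_inter_union_side hs hC has ha
  have comparable : ∀ s ∈ 𝓗, a ∈ s → ∀ t ∈ 𝓗, a ∈ t → ¬ y ∩ z ⊆ s → s ⊆ t ∨ t ⊆ s := by
    intro s hs has t ht hat hCs
    rcases hnest.total ⟨⟨s, hs, rfl⟩, has, haX⟩ ⟨⟨t, ht, rfl⟩, hat, haX⟩ with hst | hts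
    · exact .inl fun x hx => (hst ⟨hx, subset_X hs has hCs hx⟩).1
    · have hCt : ¬ y ∩ z ⊆ t := fun hCt => hCs fun x hx => (hts ⟨hCt hx, hCX hx⟩).1
      exact .inr fun x hx => (hts ⟨hx, subset_X ht hat hCt hx⟩).1
  rintro s ⟨hs, has⟩ t ⟨ht, hat⟩ -
  by_cases hCs : y ∩ z ⊆ s
  · by_cases hCt : y ∩ z ⊆ t
    · by_contra! hst
      have heq : s ∩ t = y ∩ z := h.eq_of_subset s hs t ht hst (Set.subset_inter hCs hCt)
      exact notMem_inter_of_mem_side ha (heq ▸ ⟨has, hat⟩)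
    · exact (comparable t ht hat s hs has hCt).symm
  · exact comparable s hs has t ht hat hCs

theorem IsMaximalCross.exists_isNestPoint_mem_side_of_trace (h : IsMaximalCross 𝓗 y z)
    (h𝓗 : IsTotallyBalanced 𝓗) (hnest : HasNestPoints (trace 𝓗 (y ∩ z ∪ side 𝓗 y z))) :
    ∃ a ∈ side 𝓗 y z, IsNestPoint 𝓗 a := by
  have hdisj := h𝓗.disjoint_side h.left_mem h.right_mem
  set X := y ∩ z ∪ side 𝓗 y z
  have hzX : z ∩ X = y ∩ z := by
    have := Set.disjoint_left.mp hdisj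
    have := @diff_subset_side _ 𝓗 z y
    grind
  obtain ⟨p, hp⟩ := h.diff_nonempty
  have hpX : p ∈ ⋃₀ trace 𝓗 X :=
    ⟨y ∩ X, ⟨y, h.left_mem, rfl⟩, hp.1, .inr (diff_subset_side hp)⟩
  obtain ⟨a, ⟨_, ⟨s, -, rfl⟩, -, haX⟩, haz, ha⟩ := hnest (y ∩ z) ⟨z, h.right_mem, hzX⟩
    fun hsub => hp.2 (hsub hpX).2
  have haside : a ∈ side 𝓗 y z := haX.resolve_left haz
  exact ⟨a, haside, h.isNestPoint_of_trace haside ha⟩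

theorem side_congr {z' : Set α} (h : y ∩ z' = y ∩ z) : side 𝓗 y z' = side 𝓗 y z := by
  rw [side, side, h, ← Set.sdiff_self_inter (t := z'), h, Set.sdiff_self_inter]

theorem IsMaximalCross.disjoint_side_of_incompRel (h : IsMaximalCross 𝓗 y z)
    (h𝓗 : IsTotallyBalanced 𝓗) (ht : t ∈ 𝓗) (hyt : IncompRel (· ⊆ ·) y t) (hC : y ∩ z ⊆ t) :
    Disjoint (side 𝓗 y z) t := by
  have heq : y ∩ t = y ∩ z :=
    h.eq_of_subset y h.left_mem t ht hyt (Set.subset_inter Set.inter_subset_left hC)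
  have hdisj := h𝓗.disjoint_side h.left_mem ht
  rw [side_congr heq, Set.disjoint_left] at hdisj
  refine Set.disjoint_left.mpr fun a ha hat => hdisj ha (diff_subset_side ⟨hat, fun hay => ?_⟩)
  exact notMem_inter_of_mem_side ha (heq ▸ ⟨hay, hat⟩)

theorem IsMaximalCross.disjoint_of_mem_side (h : IsMaximalCross 𝓗 y z) (h𝓗 : IsTotallyBalanced 𝓗)
    (ht : t ∈ 𝓗) (hC : ¬ y ∩ z ⊆ t) (hat : a ∈ t) (ha : a ∈ side 𝓗 y z) :
    Disjoint t (side 𝓗 z y) := by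
  refine Set.disjoint_left.mpr fun b hbt hb => ?_
  have hb' : b ∈ side 𝓗 y z := mem_side_of_mem ht hC hat hbt ha
    (Set.inter_comm y z ▸ notMem_inter_of_mem_side hb)
  exact Set.disjoint_left.mp (h𝓗.disjoint_side h.left_mem h.right_mem) hb' hb

theorem IsMaximalCross.disjoint_left_side (h : IsMaximalCross 𝓗 y z) (h𝓗 : IsTotallyBalanced 𝓗) :
    Disjoint y (side 𝓗 z y) := by
  refine Set.disjoint_left.mpr fun b hby hb => ?_
  have hb' : b ∈ side 𝓗 y z :=
    diff_subset_side ⟨hby, fun hbz => notMem_inter_of_mem_side hb ⟨hbz, hby⟩⟩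
  exact Set.disjoint_left.mp (h𝓗.disjoint_side h.left_mem h.right_mem) hb' hb

/- If `t` does not contain `y ∩ z`, it meets at most one side. Otherwise it misses the side of any
of `y` and `z` that is incomparable to it, and it is contained in the comparable ones. -/
theorem IsMaximalCross.exists_isNestPoint_notMem (h : IsMaximalCross 𝓗 y z)
    (h𝓗 : IsTotallyBalanced 𝓗) (ht : t ∈ 𝓗) (hmin : ∀ s ∈ 𝓗, s ⊆ t → s = t)
    (hleft : ∃ a ∈ side 𝓗 y z, IsNestPoint 𝓗 a) (hright : ∃ a ∈ side 𝓗 z y, IsNestPoint 𝓗 a) :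
    ∃ a ∈ ⋃₀ 𝓗, a ∉ t ∧ IsNestPoint 𝓗 a := by
  obtain ⟨a, ha, hanest⟩ := hleft
  obtain ⟨b, hb, hbnest⟩ := hright
  by_contra! hall
  have hat : a ∈ t := by_contra fun hat => hall a (side_subset_sUnion h.left_mem ha) hat hanest
  have hbt : b ∈ t := by_contra fun hbt => hall b (side_subset_sUnion h.right_mem hb) hbt hbnest
  by_cases hC : y ∩ z ⊆ t
  · have left_comparable : y ⊆ t ∨ t ⊆ y := by
      by_contra! hyt
      exact Set.disjoint_left.mp (h.disjoint_side_of_incompRel h𝓗 ht hyt hC) ha hat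
    have right_comparable : z ⊆ t ∨ t ⊆ z := by
      by_contra! hzt
      exact Set.disjoint_left.mp
        (h.symm.disjoint_side_of_incompRel h𝓗 ht hzt (Set.inter_comm y z ▸ hC)) hb hbt
    have hty : t ⊆ y := left_comparable.elim (fun hyt => (hmin y h.left_mem hyt).ge) id
    have htz : t ⊆ z := right_comparable.elim (fun hzt => (hmin z h.right_mem hzt).ge) id
    exact notMem_inter_of_mem_side ha ⟨hty hat, htz hat⟩
  · exact Set.disjoint_left.mp (h.disjoint_of_mem_side h𝓗 ht hC hat ha) hbt hb

theorem IsNestPoint.of_sep_not_ssubset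
    (ha : IsNestPoint {s ∈ 𝓗 | s ⊆ t → s = t} a) (hat : a ∉ t) : IsNestPoint 𝓗 a :=
  IsChain.mono (t := {s ∈ {s ∈ 𝓗 | s ⊆ t → s = t} | a ∈ s})
    (fun _ hs => ⟨⟨hs.1, fun hst => absurd (hst hs.2) hat⟩, hs.2⟩) ha

theorem sUnion_sep_not_ssubset (ht : t ∈ 𝓗) : ⋃₀ {s ∈ 𝓗 | s ⊆ t → s = t} = ⋃₀ 𝓗 := by
  refine (Set.sUnion_mono (Set.sep_subset _ _)).antisymm ?_
  rintro a ⟨s, hs, has⟩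
  by_cases hst : s ⊆ t
  exacts [⟨t, ⟨ht, fun _ => rfl⟩, hst has⟩, ⟨s, ⟨hs, fun h => absurd h hst⟩, has⟩]

theorem IsMaximalCross.sUnion_trace_ssubset (h : IsMaximalCross 𝓗 y z) (h𝓗 : IsTotallyBalanced 𝓗) :
    ⋃₀ trace 𝓗 (y ∩ z ∪ side 𝓗 y z) ⊂ ⋃₀ 𝓗 := by
  refine Set.ssubset_iff_of_subset ?_ |>.mpr ?_
  · rintro _ ⟨_, ⟨s, hs, rfl⟩, has, -⟩
    exact ⟨s, hs, has⟩
  · obtain ⟨p, hpz, hpy⟩ := h.symm.diff_nonempty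
    refine ⟨p, ⟨z, h.right_mem, hpz⟩, ?_⟩
    rintro ⟨_, ⟨s, -, rfl⟩, -, hpC | hpside⟩
    · exact hpy hpC.1
    · exact Set.disjoint_left.mp (h𝓗.disjoint_side h.left_mem h.right_mem) hpside
        (diff_subset_side ⟨hpz, hpy⟩)

theorem IsTotallyBalanced.hasNestPoints (h𝓗 : IsTotallyBalanced 𝓗) (hfin : (⋃₀ 𝓗).Finite) :
    HasNestPoints 𝓗 := by
  induction hn : (⋃₀ 𝓗).ncard using Nat.strong_induction_on generalizing 𝓗 with
  | _ n ih =>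
  intro t ht hnot
  let 𝓚 : Set (Set α) := {s ∈ 𝓗 | s ⊆ t → s = t}
  have h𝓚𝓗 : ⋃₀ 𝓚 = ⋃₀ 𝓗 := sUnion_sep_not_ssubset ht
  have h𝓚 : IsTotallyBalanced 𝓚 := h𝓗.mono (Set.sep_subset _ _)
  suffices ∃ a ∈ ⋃₀ 𝓚, a ∉ t ∧ IsNestPoint 𝓚 a by
    obtain ⟨a, ha, hat, hnest⟩ := this
    exact ⟨a, h𝓚𝓗 ▸ ha, hat, hnest.of_sep_not_ssubset hat⟩
  by_cases hchain : IsChain (· ⊆ ·) 𝓚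
  · obtain ⟨x, hx, hxt⟩ := Set.not_subset.mp hnot
    exact ⟨x, h𝓚𝓗 ▸ hx, hxt, hchain.mono (Set.sep_subset _ _)⟩
  · have h𝓚fin : 𝓚.Finite := hfin.finite_subsets.subset fun s hs => Set.subset_sUnion_of_mem hs.1
    obtain ⟨r, hr, s, hs, hrs⟩ : ∃ r ∈ 𝓚, ∃ s ∈ 𝓚, IncompRel (· ⊆ ·) r s := by
      simp only [IsChain, Set.Pairwise] at hchain
      push Not at hchain
      exact hchain.imp fun r hr => ⟨hr.1, hr.2.imp fun s hs => ⟨hs.1, hs.2.2⟩⟩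
    obtain ⟨y, z, hyz, -⟩ := exists_isMaximalCross h𝓚fin hr hs hrs
    have hnest {y z} (h : IsMaximalCross 𝓚 y z) : ∃ a ∈ side 𝓚 y z, IsNestPoint 𝓚 a := by
      have hss : ⋃₀ trace 𝓚 (y ∩ z ∪ side 𝓚 y z) ⊂ ⋃₀ 𝓗 := h𝓚𝓗 ▸ h.sUnion_trace_ssubset h𝓚
      exact h.exists_isNestPoint_mem_side_of_trace h𝓚 <|
        ih _ (hn ▸ Set.ncard_lt_ncard hss hfin) (h𝓚.trace _) (hfin.subset hss.subset) rfl
    exact hyz.exists_isNestPoint_notMem h𝓚 ⟨ht, fun _ => rfl⟩ (fun s hs => hs.2)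
      (hnest hyz) (hnest hyz.symm)

theorem IsMaximalCross.exists_isNestPoint_mem_side (h : IsMaximalCross 𝓗 y z)
    (h𝓗 : IsTotallyBalanced 𝓗) (hfin : (⋃₀ 𝓗).Finite) : ∃ a ∈ side 𝓗 y z, IsNestPoint 𝓗 a :=
  h.exists_isNestPoint_mem_side_of_trace h𝓗 <|
    (h𝓗.trace _).hasNestPoints (hfin.subset (h.sUnion_trace_ssubset h𝓗).subset)

end Hypergraph

/-! ### Closed neighbourhoods in strongly chordal graphs -/

section IncidenceCycle

variable {G : SimpleGraph V} {p : ℕ → V} {m : ℕ}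

/-- A closed sequence `p 0, …, p m = p 0`, extended periodically, in which two terms at odd distance
are equal or adjacent exactly if they are cyclically consecutive. Alternate terms are to be read as
vertices and as closed neighbourhoods, so nothing is required at even distance, and consecutive
terms may coincide. -/
structure IsIncidenceCycle (G : SimpleGraph V) (p : ℕ → V) (m : ℕ) : Prop where
  periodic : Function.Periodic p m
  mem_iff : ∀ i d, Odd d → d < m → (p (i + d) ∈ closedNbhd G (p i) ↔ d = 1 ∨ d + 1 = m)

theorem IsIncidenceCycle.mem_iff_of_lt (h : IsIncidenceCycle G p m) {i j : ℕ} (hij : i < j)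
    (hodd : Odd (j - i)) (hj : j < i + m) :
    p j ∈ closedNbhd G (p i) ↔ j = i + 1 ∨ j + 1 = i + m := by
  obtain ⟨d, rfl⟩ := Nat.exists_eq_add_of_le hij.le
  rw [h.mem_iff i d (by simpa using hodd) (by omega)]
  omega

theorem IsIncidenceCycle.succ_mem (h : IsIncidenceCycle G p m) (hm : 1 < m) (i : ℕ) :
    p (i + 1) ∈ closedNbhd G (p i) :=
  (h.mem_iff i 1 odd_one hm).mpr (.inl rfl)

theorem IsIncidenceCycle.ne_succ (h : IsIncidenceCycle G p m) (hG : Chordal G) (heven : Even m)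
    (hm : 6 ≤ m) (i : ℕ) : p i ≠ p (i + 1) := by
  intro heq
  obtain ⟨w, hw⟩ := exists_walk_of_mem_closedNbhd p (show i + 2 ≤ i + m - 1 by omega)
    fun k _ _ => h.succ_mem (by omega) k
  have hfirst : p (i + 2) ∈ closedNbhd G (p i) := heq ▸ h.succ_mem (by omega) (i + 1)
  have hlast : p (i + m - 1) ∈ closedNbhd G (p i) :=
    (h.mem_iff_of_lt (by omega) (by grind) (by omega)).mpr (.inr (by omega))
  have hends : p (i + 2) ∉ closedNbhd G (p (i + m - 1)) := by
    rw [mem_closedNbhd_comm, h.mem_iff_of_lt (by omega) (by grind) (by omega)]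
    omega
  obtain ⟨x, hx, hxfirst, hxlast, hxi⟩ := hG.exists_mem_support_closedNbhd hfirst hlast hends w
  obtain ⟨k, hik, hkm, rfl⟩ := hw x hx
  have hk : k ≠ i + 2 ∧ k ≠ i + m - 1 := ⟨fun hk => hxfirst (hk ▸ rfl), fun hk => hxlast (hk ▸ rfl)⟩
  rcases Nat.even_or_odd (k - i) with hpar | hpar
  · rw [heq, h.mem_iff_of_lt (by omega) (by grind) (by omega)] at hxi
    omega
  · rw [h.mem_iff_of_lt (by omega) hpar (by omega)] at hxi
    omega

theorem IsIncidenceCycle.ne_of_lt (h : IsIncidenceCycle G p m) (hG : Chordal G) (heven : Even m)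
    (hm : 6 ≤ m) {i j : ℕ} (hij : i < j) (hj : j < i + m) : p i ≠ p j := by
  intro heq
  rcases Nat.even_or_odd (j - i) with hpar | hpar
  · have hnext : p (j + 1) ∈ closedNbhd G (p i) := heq ▸ h.succ_mem (by omega) j
    have hprev : p (j - 1) ∈ closedNbhd G (p i) := by
      rw [heq, mem_closedNbhd_comm]
      simpa [Nat.sub_add_cancel (Nat.one_le_of_lt hij)] using h.succ_mem (by omega) (j - 1)
    rw [h.mem_iff_of_lt (by omega) (by grind) (by grind)] at hnext hprev
    omega
  · rcases (h.mem_iff_of_lt hij hpar hj).mp (heq ▸ self_mem_closedNbhd) with rfl | hlast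
    · exact h.ne_succ hG heven hm i heq
    · exact h.ne_succ hG heven hm j (by rw [hlast, h.periodic, heq])

theorem StronglyChordal.not_isIncidenceCycle (hG : StronglyChordal G) (heven : Even m)
    (hm : 6 ≤ m) : ¬ IsIncidenceCycle G p m := by
  intro h
  have hadj : ∀ i < m, G.Adj (p i) (p (i + 1)) := fun i _ =>
    adj_of_mem_closedNbhd (h.succ_mem (by omega) i) (h.ne_succ hG.1 heven hm i)
  have hinj : Set.InjOn p (Set.Iio m) := by
    intro i hi j hj hij
    rw [Set.mem_Iio] at hi hj
    rcases lt_trichotomy i j with hlt | hlt | hlt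
    exacts [absurd hij (h.ne_of_lt hG.1 heven hm hlt (by omega)), hlt,
      absurd hij.symm (h.ne_of_lt hG.1 heven hm hlt (by omega))]
  obtain ⟨w, hw, hsupp⟩ := exists_isCycle_of_seq (by omega) hadj h.periodic.eq hinj
  have hlen : w.length = m := by simpa [hsupp] using w.length_support.symm
  obtain ⟨i, j, hi, hj, hij, hchord, hodd, hdist⟩ := hG.2 _ w hw (hlen ▸ heven) (hlen ▸ hm)
  simp only [hsupp, hlen, List.get_eq_getElem, List.getElem_map, List.getElem_range] at *
  have := (h.mem_iff_of_lt hij (by grind) (by omega)).mp (.inr hchord)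
  omega

end IncidenceCycle

section TotallyBalanced

variable {G : SimpleGraph V} {v : V}

/-- The sequence `x 0, t 0, x 1, t 1, …`. -/
def interleave {α : Type*} (x t : ℕ → α) (s : ℕ) : α :=
  if Even s then x (s / 2) else t (s / 2)

theorem interleave_even {α : Type*} (x t : ℕ → α) (i : ℕ) : interleave x t (2 * i) = x i := by
  simp [interleave]

theorem interleave_odd {α : Type*} (x t : ℕ → α) (i : ℕ) : interleave x t (2 * i + 1) = t i := by
  simp [interleave, Nat.add_div_of_dvd_right]

theorem mem_closedNbhd_interleave_iff {x t : ℕ → V} {n : ℕ}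
    (h : ∀ i < n, ∀ j < n, x i ∈ closedNbhd G (t j) ↔ j = i ∨ j = i + 1 ∨ i + 1 = n ∧ j = 0)
    {r s : ℕ} (hr : r < 2 * n) (hs : s < 2 * n) (hodd : Odd (r + s)) :
    interleave t x s ∈ closedNbhd G (interleave t x r) ↔
      s = r + 1 ∨ r = s + 1 ∨ s + 1 = 2 * n ∧ r = 0 ∨ r + 1 = 2 * n ∧ s = 0 := by
  rcases Nat.even_or_odd' r with ⟨i, rfl | rfl⟩ <;> rcases Nat.even_or_odd' s with ⟨j, rfl | rfl⟩
  · grind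
  · rw [interleave_even, interleave_odd, h j (by omega) i (by omega)]
    omega
  · rw [interleave_even, interleave_odd, mem_closedNbhd_comm, h i (by omega) j (by omega)]
    omega
  · grind

/-- The hypergraph of the closed neighbourhoods of the vertices of a graph. -/
abbrev nbhdHypergraph (G : SimpleGraph V) : Set (Set V) := Set.range (closedNbhd G)

theorem StronglyChordal.isTotallyBalanced_nbhdHypergraph (hG : StronglyChordal G) :
    IsTotallyBalanced (nbhdHypergraph G) := by
  intro n hn x s hs hxs
  have : Nonempty V := ⟨x 0⟩
  choose! t ht using hs
  have hxt : ∀ i < n, ∀ j < n, x i ∈ closedNbhd G (t j) ↔ j = i ∨ j = i + 1 ∨ i + 1 = n ∧ j = 0 :=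
    fun i hi j hj => ht j hj ▸ hxs i hi j hj
  refine hG.not_isIncidenceCycle (p := fun k => interleave t x (k % (2 * n))) (m := 2 * n)
    (even_two_mul n) (by omega) ⟨fun k => by simp, fun i d hodd hd => ?_⟩
  have hi : i % (2 * n) < 2 * n := Nat.mod_lt _ (by omega)
  have hid : (i + d) % (2 * n) < 2 * n := Nat.mod_lt _ (by omega)
  have hmod : (i + d) % (2 * n) = i % (2 * n) + d ∨
      (i + d) % (2 * n) + 2 * n = i % (2 * n) + d := by
    rw [← Nat.mod_add_mod]
    generalize i % (2 * n) = r at hi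
    rcases lt_or_ge (r + d) (2 * n) with hlt | hge
    · exact .inl (Nat.mod_eq_of_lt hlt)
    · rw [Nat.mod_eq_sub_mod hge, Nat.mod_eq_of_lt (by omega)]
      omega
  rw [mem_closedNbhd_interleave_iff hxt hi hid (by grind)]
  omega

theorem simpleVtx_iff_isNestPoint : SimpleVtx G v ↔ IsNestPoint (nbhdHypergraph G) v := by
  constructor
  · rintro h _ ⟨⟨u, rfl⟩, hu⟩ _ ⟨⟨w, rfl⟩, hw⟩ -
    exact h u (mem_closedNbhd_comm.mp hu) w (mem_closedNbhd_comm.mp hw)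
  · intro h u hu w hw
    exact h.total ⟨⟨u, rfl⟩, mem_closedNbhd_comm.mp hu⟩ ⟨⟨w, rfl⟩, mem_closedNbhd_comm.mp hw⟩

end TotallyBalanced

/-! ### Collapsing stuttering paths -/

section Collapse

variable {α : Type*} {p : ℕ → α} {f : ℕ → ℕ} {m n : ℕ}

/-- The sequence `p ∘ f`, up to its index `m`, arises from `p 0, …, p n` by keeping only the last
term of every block of equal consecutive terms. -/
structure IsCollapse (p : ℕ → α) (n : ℕ) (f : ℕ → ℕ) (m : ℕ) : Prop where
  strictMono : StrictMono f
  map_last : f m = n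
  mem_range_iff : ∀ t < n, t ∈ Set.range f ↔ p t ≠ p (t + 1)

theorem exists_isCollapse (p : ℕ → α) (n : ℕ) : ∃ f m, IsCollapse p n f m := by
  have hinf : {t | n ≤ t ∨ p t ≠ p (t + 1)}.Infinite := (Set.Ici_infinite n).mono fun _ => .inl
  have hmem : ∀ t, t ∈ Set.range (Nat.nth _) ↔ n ≤ t ∨ p t ≠ p (t + 1) :=
    Set.ext_iff.mp (Nat.range_nth_of_infinite hinf)
  obtain ⟨m, hm⟩ := (hmem n).mpr (.inl le_rfl)
  refine ⟨_, m, Nat.nth_strictMono hinf, hm, fun t ht => ?_⟩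
  rw [hmem, or_iff_right ht.not_ge]

theorem IsCollapse.eq_of_gap (h : IsCollapse p n f m) {a b : ℕ} (hab : a ≤ b) (hb : b ≤ n)
    (hgap : ∀ t, a ≤ t → t < b → t ∉ Set.range f) : p a = p b := by
  induction b, hab using Nat.le_induction with
  | base => rfl
  | succ b hab ih =>
    have hstep : p b = p (b + 1) := by
      simpa using (h.mem_range_iff b hb).not.mp (hgap b hab b.lt_succ_self)
    exact (ih (by omega) fun t hat htb => hgap t hat (by omega)).trans hstep

theorem IsCollapse.lt_last (h : IsCollapse p n f m) {k : ℕ} (hk : k < m) : f k < n :=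
  h.map_last ▸ h.strictMono hk

theorem IsCollapse.exists_eq (h : IsCollapse p n f m) {s : ℕ} (hs : s ≤ n) :
    ∃ k ≤ m, p (f k) = p s := by
  have hex : ∃ k, s ≤ f k := ⟨m, h.map_last.symm ▸ hs⟩
  have hle : Nat.find hex ≤ m := Nat.find_min' hex (h.map_last.symm ▸ hs)
  refine ⟨Nat.find hex, hle, (h.eq_of_gap (Nat.find_spec hex) ?_ ?_).symm⟩
  · exact h.map_last ▸ h.strictMono.monotone hle
  · rintro _ hst hlt ⟨k, rfl⟩
    exact Nat.find_min hex (h.strictMono.lt_iff_lt.mp hlt) hst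

theorem IsCollapse.apply_zero (h : IsCollapse p n f m) : p (f 0) = p 0 := by
  refine (h.eq_of_gap (Nat.zero_le _) (h.map_last ▸ h.strictMono.monotone m.zero_le) ?_).symm
  rintro _ - hlt ⟨k, rfl⟩
  exact (h.strictMono.lt_iff_lt.mp hlt).not_ge k.zero_le

theorem IsCollapse.apply_succ (h : IsCollapse p n f m) {k : ℕ} (hk : k < m) :
    p (f k + 1) = p (f (k + 1)) := by
  refine h.eq_of_gap (h.strictMono (Nat.lt_add_one k)) (h.map_last ▸ h.strictMono.monotone hk) ?_
  rintro _ hle hlt ⟨i, rfl⟩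
  rw [Nat.succ_le_iff, h.strictMono.lt_iff_lt] at hle
  rw [h.strictMono.lt_iff_lt] at hlt
  omega

theorem IsCollapse.ne_succ (h : IsCollapse p n f m) {k : ℕ} (hk : k < m) : p (f k) ≠ p (f k + 1) :=
  (h.mem_range_iff _ (h.lt_last hk)).mp (Set.mem_range_self k)

theorem IsCollapse.map_succ (h : IsCollapse p n f m) {k : ℕ}
    (hne : ∀ t, f k < t → t < f (k + 1) → p t ≠ p (t + 1)) (hk : k < m) :
    f (k + 1) = f k + 1 := by
  by_contra hgap
  have hlt : f k + 1 < f (k + 1) := by have := h.strictMono (Nat.lt_add_one k); omega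
  have hle : f (k + 1) ≤ n := h.map_last ▸ h.strictMono.monotone hk
  obtain ⟨i, hi⟩ := (h.mem_range_iff _ (by omega)).mpr (hne _ (by omega) hlt)
  have hki : k < i := h.strictMono.lt_iff_lt.mp (by omega)
  have hik : i < k + 1 := h.strictMono.lt_iff_lt.mp (by omega)
  omega

theorem IsCollapse.map_add (h : IsCollapse p n f m) {i d : ℕ} (hd : i + d ≤ m)
    (hne : ∀ t, f i ≤ t → t < f (i + d) → p t ≠ p (t + 1)) : f (i + d) = f i + d := by
  induction d with
  | zero => rfl
  | succ d ih =>
    have hlt : f (i + d) < f (i + (d + 1)) := h.strictMono (by omega)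
    have hfi : f i ≤ f (i + d) := h.strictMono.monotone (by omega)
    have := h.map_succ (fun t ht ht' => hne t (by omega) ht') (k := i + d) (by omega)
    have := ih (by omega) fun t ht ht' => hne t ht (by omega)
    simp only [Nat.add_assoc] at *
    omega

end Collapse

section EvenChorded

variable {G : SimpleGraph V} {p : ℕ → V} {n : ℕ}

theorem exists_isEvenChorded_of_seq (hadj : ∀ i < n, G.Adj (p i) (p (i + 1)))
    (hchord : ∀ i j, i + 1 < j → j ≤ n → p j ∈ closedNbhd G (p i) → Even (j - i) ∧ 0 < i ∧ j < n) :
    ∃ w : G.Walk (p 0) (p n), IsEvenChorded G w ∧ w.support = (List.range (n + 1)).map p := by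
  have hne : ∀ i j, i < j → j ≤ n → p i ≠ p j := by
    intro i j hij hj heq
    obtain rfl | hij' := Nat.succ_le_iff.mpr hij |>.eq_or_lt
    · exact (hadj i hj).ne heq
    · obtain ⟨heven, hi, -⟩ := hchord i j hij' hj (.inl heq.symm)
      have hprev : p j ∈ closedNbhd G (p (i - 1)) := by
        rw [← heq, mem_closedNbhd_iff]
        exact .inr (by simpa [Nat.sub_add_cancel hi] using hadj (i - 1) (by omega))
      have := (hchord (i - 1) j (by omega) hj hprev).1
      grind
  obtain ⟨w, hw⟩ := exists_walk_of_seq p n hadj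
  refine ⟨w, ⟨isPath_of_support_eq hw hne, fun i j hi hj hij hmem => ?_⟩, hw⟩
  have hlen : w.support.length = n + 1 := by simp [hw]
  simp only [hw, List.get_eq_getElem, List.getElem_map, List.getElem_range] at hmem
  simpa [hlen] using hchord i j hij (by omega) (.inr hmem)

/-- The sequence `p 0, …, p n`, in which consecutive terms may coincide, becomes an even-chorded
path once coinciding consecutive terms are identified. -/
structure IsStutteringEvenChorded (G : SimpleGraph V) (p : ℕ → V) (n : ℕ) : Prop where
  succ_mem : ∀ i < n, p (i + 1) ∈ closedNbhd G (p i)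
  chord : ∀ i j, i + 1 < j → j ≤ n → p j ∈ closedNbhd G (p i) →
    (j = i + 2 ∧ (p i = p (i + 1) ∨ p (i + 1) = p (i + 2))) ∨
      (Even (j - i) ∧ 0 < i ∧ j < n ∧ ∀ t, i ≤ t → t < j → p t ≠ p (t + 1))

theorem IsStutteringEvenChorded.chord_collapse (h : IsStutteringEvenChorded G p n) {f : ℕ → ℕ}
    {m i j : ℕ} (hf : IsCollapse p n f m) (hij : i + 1 < j) (hj : j ≤ m)
    (hmem : p (f j) ∈ closedNbhd G (p (f i))) : Even (j - i) ∧ 0 < i ∧ j < m := by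
  have hfi : f i < f (i + 1) := hf.strictMono (Nat.lt_add_one i)
  have hfij : f (i + 1) < f j := hf.strictMono hij
  have hfj : f j ≤ n := hf.map_last ▸ hf.strictMono.monotone hj
  rcases h.chord (f i) (f j) (by omega) hfj hmem with ⟨htwo, heq⟩ | ⟨heven, -, hjn, hne⟩
  · have hsucc : f i + 1 = f (i + 1) := by omega
    rcases heq with heq | heq
    · exact absurd heq (hf.ne_succ (by omega))
    · exact absurd (by rwa [hsucc, show f i + 2 = f (i + 1) + 1 by omega] at heq)
        (hf.ne_succ (k := i + 1) (by omega))
  · obtain ⟨d, rfl⟩ := Nat.exists_eq_add_of_le (show i ≤ j by omega)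
    have hfd : f (i + d) = f i + d := hf.map_add hj hne
    refine ⟨by simpa [hfd] using heven, ?_, hf.strictMono.lt_iff_lt.mp (hf.map_last ▸ hjn)⟩
    by_contra! hi
    obtain rfl : i = 0 := by omega
    rw [hf.apply_zero] at hmem
    rcases h.chord 0 (f (0 + d)) (by omega) hfj hmem with ⟨htwo, heq⟩ | ⟨-, hlt, -⟩
    · grind
    · exact hlt.false

theorem IsStutteringEvenChorded.exists_isEvenChorded (h : IsStutteringEvenChorded G p n) :
    ∃ w : G.Walk (p 0) (p n), IsEvenChorded G w ∧ ∀ s ≤ n, p s ∈ w.support := by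
  obtain ⟨f, m, hf⟩ := exists_isCollapse p n
  have hadj : ∀ k < m, G.Adj (p (f k)) (p (f (k + 1))) := fun k hk => by
    rw [← hf.apply_succ hk]
    exact adj_of_mem_closedNbhd (h.succ_mem _ (hf.lt_last hk)) (hf.ne_succ hk)
  obtain ⟨w, hw, hsupp⟩ := exists_isEvenChorded_of_seq (p := p ∘ f) hadj
    fun i j hij hj hmem => h.chord_collapse hf hij hj hmem
  rw [← hf.apply_zero, ← show p (f m) = p n by rw [hf.map_last]]
  refine ⟨w, hw, fun s hs => ?_⟩
  obtain ⟨k, hk, heq⟩ := hf.exists_eq hs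
  rw [hsupp, List.mem_map]
  exact ⟨k, List.mem_range.mpr (by omega), heq⟩

end EvenChorded

/-! ### Incidence paths -/

section IncidencePath

variable {G : SimpleGraph V} {p : ℕ → V} {n : ℕ}

/-- In the sequence `p 0, …, p n`, two terms at odd distance are equal or adjacent exactly if they
are consecutive: reading alternate terms as vertices and as closed neighbourhoods, it is an induced
path of the incidence graph of the closed neighbourhood hypergraph. -/
def IsIncidencePath (G : SimpleGraph V) (p : ℕ → V) (n : ℕ) : Prop :=
  ∀ i ≤ n, ∀ j ≤ n, Odd (i + j) → (p j ∈ closedNbhd G (p i) ↔ j = i + 1 ∨ i = j + 1)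

theorem IsIncidencePath.reverse (h : IsIncidencePath G p n) :
    IsIncidencePath G (fun i => p (n - i)) n := by
  intro i hi j hj hodd
  rw [h (n - i) (by omega) (n - j) (by omega) (by grind)]
  omega

theorem IsIncidencePath.succ_mem (h : IsIncidencePath G p n) {i : ℕ} (hi : i < n) :
    p (i + 1) ∈ closedNbhd G (p i) :=
  (h i hi.le (i + 1) hi (by grind)).mpr (.inl rfl)

theorem IsIncidencePath.notMem_of_eq_succ (h : IsIncidencePath G p n) {t s : ℕ} (ht : t < n)
    (heq : p t = p (t + 1)) (hs : s ≤ n) (hst : s + 1 < t ∨ t + 2 < s) :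
    p s ∉ closedNbhd G (p t) := by
  rcases Nat.even_or_odd (t + s) with hpar | hpar
  · rw [heq, h (t + 1) ht s hs (by grind)]
    omega
  · rw [h t ht.le s hs hpar]
    omega

theorem exists_walk_around (hp : ∀ i < n, p (i + 1) ∈ closedNbhd G (p i)) {i a b j : ℕ}
    (hia : i ≤ a) (han : a ≤ n) (hbj : b ≤ j) (hj : j ≤ n) (hij : p j ∈ closedNbhd G (p i)) :
    ∃ w : G.Walk (p a) (p b), ∀ x ∈ w.support, ∃ s, (s ≤ a ∨ b ≤ s) ∧ s ≤ n ∧ p s = x := by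
  obtain ⟨w₁, hw₁⟩ := exists_walk_of_mem_closedNbhd p hia fun k _ hk => hp k (by omega)
  obtain ⟨w₂, hw₂⟩ := exists_walk_of_mem_closedNbhd p hbj fun k _ hk => hp k (by omega)
  have hw₁' : ∀ x ∈ w₁.support, ∃ s, (s ≤ a ∨ b ≤ s) ∧ s ≤ n ∧ p s = x := fun x hx =>
    (hw₁ x hx).imp fun s hs => ⟨.inl hs.2.1, by omega, hs.2.2⟩
  have hw₂' : ∀ x ∈ w₂.support, ∃ s, (s ≤ a ∨ b ≤ s) ∧ s ≤ n ∧ p s = x := fun x hx =>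
    (hw₂ x hx).imp fun s hs => ⟨.inr hs.1, by omega, hs.2.2⟩
  rcases hij with heq | hadj
  · refine ⟨w₁.reverse.append (w₂.reverse.copy heq rfl), fun x hx => ?_⟩
    rw [Walk.mem_support_append_iff, Walk.support_copy] at hx
    simp only [Walk.support_reverse, List.mem_reverse] at hx
    exact hx.elim (hw₁' x) (hw₂' x)
  · refine ⟨w₁.reverse.append (.cons ((G.mem_neighborSet ..).mp hadj) w₂.reverse), fun x hx => ?_⟩
    simp only [Walk.mem_support_append_iff, Walk.support_cons, Walk.support_reverse,
      List.mem_reverse, List.mem_cons] at hx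
    rcases hx with hx | rfl | hx
    exacts [hw₁' x hx, hw₁' _ w₁.start_mem_support, hw₂' x hx]

theorem IsIncidencePath.ne_succ_of_mem_closedNbhd (h : IsIncidencePath G p n) (hG : Chordal G)
    {i j t : ℕ} (hj : j ≤ n) (hmem : p j ∈ closedNbhd G (p i)) (hit : i < t) (htj : t + 1 < j) :
    p t ≠ p (t + 1) := by
  intro heq
  obtain ⟨r, rfl⟩ := Nat.exists_eq_succ_of_ne_zero (show t ≠ 0 by omega)
  obtain ⟨w, hw⟩ := exists_walk_around (p := p) (fun k hk => h.succ_mem hk)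
    (show i ≤ r by omega) (by omega) (show r + 3 ≤ j by omega) hj hmem
  have hleft : p r ∈ closedNbhd G (p (r + 1)) := mem_closedNbhd_comm.mp (h.succ_mem (by omega))
  have hright : p (r + 3) ∈ closedNbhd G (p (r + 1)) := by
    rw [heq]
    exact h.succ_mem (by omega)
  have hends : p r ∉ closedNbhd G (p (r + 3)) := by
    rw [h (r + 3) (by omega) r (by omega) (by grind)]
    omega
  obtain ⟨x, hx, hxleft, hxright, hxmem⟩ := hG.exists_mem_support_closedNbhd hleft hright hends w
  obtain ⟨s, hs, hsn, rfl⟩ := hw x hx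
  have hsr : s ≠ r ∧ s ≠ r + 3 := ⟨fun hs => hxleft (hs ▸ rfl), fun hs => hxright (hs ▸ rfl)⟩
  exact h.notMem_of_eq_succ (by omega) heq hsn (by omega) hxmem

theorem IsIncidencePath.eq_add_two_of_eq_succ (h : IsIncidencePath G p n) (hG : Chordal G)
    {i j t : ℕ} (hij : i + 1 < j) (hj : j ≤ n) (hmem : p j ∈ closedNbhd G (p i)) (hit : i ≤ t)
    (htj : t < j) (heq : p t = p (t + 1)) :
    j = i + 2 ∧ (p i = p (i + 1) ∨ p (i + 1) = p (i + 2)) := by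
  have far : ∀ s ≤ n, s + 1 < t ∨ t + 2 < s → p s ∉ closedNbhd G (p t) := fun s hs =>
    h.notMem_of_eq_succ (by omega) heq hs
  obtain rfl | hit' := hit.eq_or_lt
  · have : ¬ i + 2 < j := fun hlt => far j hj (.inr hlt) hmem
    exact ⟨by omega, .inl heq⟩
  obtain rfl | htj' := Nat.succ_le_iff.mpr htj |>.eq_or_lt
  · have : ¬ i + 1 < t := fun hlt =>
      far i (by omega) (.inl hlt) (mem_closedNbhd_comm.mp (heq ▸ hmem))
    obtain rfl : t = i + 1 := by omega
    exact ⟨rfl, .inr heq⟩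
  · exact absurd heq (h.ne_succ_of_mem_closedNbhd hG hj hmem hit' htj')

theorem SimpleVtx.mem_closedNbhd {v x y : V} (h : SimpleVtx G v) (hx : x ∈ closedNbhd G v)
    (hy : y ∈ closedNbhd G v) : x ∈ closedNbhd G y := by
  rcases h x hx y hy with hsub | hsub
  exacts [hsub self_mem_closedNbhd, mem_closedNbhd_comm.mp (hsub self_mem_closedNbhd)]

/-- The sequence `p` starts at a simple vertex which, except for repetitions, lies in no chord of
length two. -/
def HasSimpleStart (G : SimpleGraph V) (p : ℕ → V) : Prop :=
  SimpleVtx G (p 0) ∧ (p 2 ∈ closedNbhd G (p 0) → p 1 = p 2)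

theorem IsIncidencePath.eq_two_of_mem_closedNbhd_zero (h : IsIncidencePath G p n)
    (hstart : HasSimpleStart G p) {j : ℕ} (hj : 1 < j) (hjn : j ≤ n)
    (hmem : p j ∈ closedNbhd G (p 0)) : j = 2 ∧ p 1 = p 2 := by
  have hj0 := h 0 (by omega) j hjn
  have hj1 := h 1 (by omega) j hjn
  have hodd : ¬ Odd (0 + j) := fun hodd => by
    have := (hj0 hodd).mp hmem
    omega
  have hmem1 : p j ∈ closedNbhd G (p 1) := hstart.1.mem_closedNbhd hmem (h.succ_mem (by omega))
  obtain rfl : j = 2 := by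
    have := (hj1 (by grind)).mp hmem1
    omega
  exact ⟨rfl, hstart.2 hmem⟩

theorem IsIncidencePath.isStutteringEvenChorded (h : IsIncidencePath G p n) (hG : Chordal G)
    (hstart : HasSimpleStart G p) (hend : HasSimpleStart G fun i => p (n - i)) :
    IsStutteringEvenChorded G p n := by
  refine ⟨fun i hi => h.succ_mem hi, fun i j hij hj hmem => ?_⟩
  by_cases hne : ∀ t, i ≤ t → t < j → p t ≠ p (t + 1)
  · refine .inr ⟨?_, ?_, ?_, hne⟩
    · by_contra hodd
      have := (h i (by omega) j hj (by grind)).mp hmem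
      omega
    · by_contra! hi
      obtain rfl : i = 0 := by omega
      obtain ⟨rfl, heq⟩ := h.eq_two_of_mem_closedNbhd_zero hstart hij hj hmem
      exact hne 1 (by omega) (by omega) heq
    · by_contra! hnj
      obtain rfl : j = n := by omega
      obtain ⟨hji, heq⟩ := h.reverse.eq_two_of_mem_closedNbhd_zero hend (j := j - i) (by omega)
        (by omega) (by simpa [show j - (j - i) = i by omega] using mem_closedNbhd_comm.mp hmem)
      refine hne i le_rfl (by omega) ?_
      simpa [show i = j - 2 by omega, show j - 2 + 1 = j - 1 by omega] using heq.symm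
  · push Not at hne
    obtain ⟨t, hit, htj, heq⟩ := hne
    exact .inl (h.eq_add_two_of_eq_succ hG hij hj hmem hit htj heq)

end IncidencePath

/-! ### Rays -/

section Ray

variable {G : SimpleGraph V} {A D : Set V} {v : V}

/-- An incidence path `h 0, …, h l` leading from a simple vertex to `v` whose even terms before `v`
lie in `A` and whose terms before `v` have no closed neighbour in `D`. Two rays leading to `v` from
two separated regions can be joined there. -/
structure IsRay (G : SimpleGraph V) (A D : Set V) (v : V) (h : ℕ → V) (l : ℕ) : Prop where
  pos : 0 < l
  apply_last : h l = v
  isIncidencePath : IsIncidencePath G h l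
  hasSimpleStart : HasSimpleStart G h
  mem_closedNbhd_iff : ∀ i ≤ l, v ∈ closedNbhd G (h i) ↔ l ≤ i + 1
  mem_of_even : ∀ i < l, Even i → h i ∈ A
  disjoint : ∀ i < l, Disjoint (closedNbhd G (h i)) D

/-- The step relation whose shortest chains unfold to rays: `x ∈ A` and `x'` have a common closed
neighbour that is `v` itself or has no closed neighbour in `D`. -/
def RayStep (G : SimpleGraph V) (A D : Set V) (v x x' : V) : Prop :=
  x ∈ A ∧ ∃ t, (t = v ∨ Disjoint (closedNbhd G t) D) ∧ x ∈ closedNbhd G t ∧ x' ∈ closedNbhd G t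

/-- A shortest chain `x 0, …, x k = v` of `RayStep` together with the common closed neighbours `t i`
of `x i` and `x (i + 1)`, chosen to be `x (i + 1)` whenever possible. -/
structure IsRayChain (G : SimpleGraph V) (A D : Set V) (v : V) (x t : ℕ → V) (k : ℕ) : Prop where
  pos : 0 < k
  apply_last : x k = v
  simple : SimpleVtx G (x 0)
  mem : ∀ i < k, x i ∈ A
  disjoint : ∀ i < k, t i = v ∨ Disjoint (closedNbhd G (t i)) D
  mem_closedNbhd_iff : ∀ i ≤ k, ∀ j < k, x i ∈ closedNbhd G (t j) ↔ i = j ∨ i = j + 1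
  eq_of_mem : ∀ i < k, x (i + 1) ∈ closedNbhd G (x i) → t i = x (i + 1)
  notMem : ∀ i, i + 1 < k → v ∉ closedNbhd G (x i)

theorem exists_isRayChain {a : V} (hvA : v ∉ A) (hAD : ∀ x ∈ A, Disjoint (closedNbhd G x) D)
    (haA : a ∈ A) (ha : SimpleVtx G a) (hchain : Relation.ReflTransGen (RayStep G A D v) a v) :
    ∃ x t k, IsRayChain G A D v x t k := by
  obtain ⟨x, k, hx⟩ := exists_isShortestChain (P := {x | x ∈ A ∧ SimpleVtx G x})
    ⟨haA, ha⟩ (Set.mem_singleton v) hchain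
  have hlast : x k = v := hx.target
  have hmem : ∀ i < k, x i ∈ A := fun i hi => (hx.step i hi).1
  have exists_middle : ∀ i, ∃ t, i < k → (t = v ∨ Disjoint (closedNbhd G t) D) ∧
      x i ∈ closedNbhd G t ∧ x (i + 1) ∈ closedNbhd G t ∧
      (x (i + 1) ∈ closedNbhd G (x i) → t = x (i + 1)) := by
    intro i
    by_cases hadj : x (i + 1) ∈ closedNbhd G (x i)
    · refine ⟨x (i + 1), fun hi =>
        ⟨?_, mem_closedNbhd_comm.mp hadj, self_mem_closedNbhd, fun _ => rfl⟩⟩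
      obtain rfl | hi' := Nat.succ_le_iff.mpr hi |>.eq_or_lt
      exacts [.inl hlast, .inr (hAD _ (hmem _ hi'))]
    · by_cases hi : i < k
      · obtain ⟨-, t, htD, hxt, hxt'⟩ := hx.step i hi
        exact ⟨t, fun _ => ⟨htD, hxt, hxt', fun h => absurd h hadj⟩⟩
      · exact ⟨v, fun h => absurd h hi⟩
  choose t ht using exists_middle
  refine ⟨x, t, k, ?_, hlast, hx.source.2, hmem, fun i hi => (ht i hi).1, fun i hi j hj => ?_,
    fun i hi => (ht i hi).2.2.2, fun i hi hvi => ?_⟩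
  · refine Nat.pos_of_ne_zero fun hk => hvA ?_
    rw [← hlast, hk]
    exact hx.source.1
  · exact hx.mem_iff (s := fun j => closedNbhd G (t j))
      (fun j hj => ⟨(ht j hj).2.1, (ht j hj).2.2.1⟩)
      (fun j hj i k hik hk hi hk' => ⟨hmem i (by omega), t j, (ht j hj).1, hi, hk'⟩) hi hj
  · refine hx.no_shortcut i k hi le_rfl ⟨hmem i (by omega), v, .inl rfl, ?_, ?_⟩
    exacts [mem_closedNbhd_comm.mp hvi, hlast ▸ self_mem_closedNbhd]

theorem IsIncidencePath.mono {p : ℕ → V} {m n : ℕ} (h : IsIncidencePath G p n) (hmn : m ≤ n) :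
    IsIncidencePath G p m :=
  fun i hi j hj => h i (hi.trans hmn) j (hj.trans hmn)

theorem isIncidencePath_interleave {x t : ℕ → V} {k : ℕ}
    (h : ∀ i ≤ k, ∀ j < k, x i ∈ closedNbhd G (t j) ↔ i = j ∨ i = j + 1) :
    IsIncidencePath G (interleave x t) (2 * k) := by
  intro r hr s hs hodd
  rcases Nat.even_or_odd' r with ⟨i, rfl | rfl⟩ <;> rcases Nat.even_or_odd' s with ⟨j, rfl | rfl⟩
  · grind
  · rw [interleave_even, interleave_odd, mem_closedNbhd_comm, h i (by omega) j (by omega)]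
    omega
  · rw [interleave_even, interleave_odd, h j (by omega) i (by omega)]
    omega
  · grind

theorem IsRayChain.isRay {x t : ℕ → V} {k l : ℕ} (h : IsRayChain G A D v x t k)
    (hAD : ∀ x ∈ A, Disjoint (closedNbhd G x) D) (hl : l = 2 * k ∨ l + 1 = 2 * k)
    (hlast : v ∈ closedNbhd G (x (k - 1)) ↔ l + 1 = 2 * k) :
    IsRay G A D v (interleave x t) l := by
  have hpos := h.pos
  have mem_vertex : ∀ i < k, v ∈ closedNbhd G (x i) ↔ l ≤ 2 * i + 1 := by
    intro i hi
    obtain hik | rfl : i + 1 < k ∨ i = k - 1 := by omega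
    · exact iff_of_false (h.notMem i hik) (by omega)
    · rw [hlast]
      omega
  have mem_nbhd : ∀ i < k, v ∈ closedNbhd G (t i) ↔ l ≤ 2 * i + 2 := by
    intro i hi
    rw [← h.apply_last, h.mem_closedNbhd_iff k le_rfl i hi]
    omega
  refine ⟨by omega, ?_, (isIncidencePath_interleave h.mem_closedNbhd_iff).mono (by omega),
    ⟨h.simple, h.eq_of_mem 0 hpos⟩, fun i hi => ?_, fun i hi heven => ?_, fun i hi => ?_⟩
  · rcases hl with rfl | hl
    · rw [interleave_even, h.apply_last]
    · have hmem := hlast.mpr hl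
      have heq := h.eq_of_mem (k - 1) (by omega)
      rw [Nat.sub_add_cancel hpos, h.apply_last] at heq
      rw [show l = 2 * (k - 1) + 1 by omega, interleave_odd, heq hmem]
  · rcases Nat.even_or_odd' i with ⟨j, rfl | rfl⟩
    · rw [interleave_even]
      obtain hj | rfl : j < k ∨ j = k := by omega
      · exact mem_vertex j hj
      · exact iff_of_true (h.apply_last ▸ self_mem_closedNbhd) (by omega)
    · rw [interleave_odd, mem_nbhd j (by omega)]
  · obtain ⟨j, rfl⟩ := heven.two_dvd
    exact interleave_even x t j ▸ h.mem j (by omega)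
  · rcases Nat.even_or_odd' i with ⟨j, rfl | rfl⟩
    · exact interleave_even x t j ▸ hAD _ (h.mem j (by omega))
    · rw [interleave_odd]
      refine (h.disjoint j (by omega)).resolve_left fun htv => ?_
      have := (mem_vertex j (by omega)).mp <| mem_closedNbhd_comm.mp <| htv ▸
        (h.mem_closedNbhd_iff j (by omega) j (by omega)).mpr (.inl rfl)
      omega

theorem exists_isRay {a : V} (hvA : v ∉ A) (hAD : ∀ x ∈ A, Disjoint (closedNbhd G x) D)
    (haA : a ∈ A) (ha : SimpleVtx G a) (hchain : Relation.ReflTransGen (RayStep G A D v) a v) :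
    ∃ h l, IsRay G A D v h l := by
  obtain ⟨x, t, k, hxt⟩ := exists_isRayChain hvA hAD haA ha hchain
  by_cases hlast : v ∈ closedNbhd G (x (k - 1))
  · exact ⟨_, 2 * k - 1, hxt.isRay hAD (by have := hxt.pos; omega)
      (iff_of_true hlast (by have := hxt.pos; omega))⟩
  · exact ⟨_, 2 * k, hxt.isRay hAD (.inl rfl) (iff_of_false hlast (by omega))⟩

end Ray

section Glue

variable {G : SimpleGraph V} {A B : Set V} {v : V} {h h' : ℕ → V} {l l' n : ℕ}

/-- The sequence `h 0, …, h l` followed by `h'` read backwards and ending in `h' 0` at index `n`. -/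
def glue {α : Type*} (h h' : ℕ → α) (l n i : ℕ) : α :=
  if i ≤ l then h i else h' (n - i)

theorem glue_left {α : Type*} (h h' : ℕ → α) (n : ℕ) {i : ℕ} (hi : i ≤ l) :
    glue h h' l n i = h i :=
  if_pos hi

theorem glue_right {α : Type*} {h h' : ℕ → α} (hv : h l = h' l') (hn : l + l' ≤ n) {i : ℕ}
    (hi : n ≤ i + l') : glue h h' l n i = h' (n - i) := by
  by_cases hil : i ≤ l
  · obtain ⟨rfl, rfl⟩ : i = l ∧ n = l + l' := by omega
    simp [glue, hv]
  · exact if_neg hil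

theorem glue_sub {α : Type*} {h h' : ℕ → α} (hv : h l = h' l') (hn : l + l' ≤ n)
    (hn' : n ≤ l + l' + 1) {i : ℕ} (hi : i ≤ n) : glue h h' l n (n - i) = glue h' h l' n i := by
  by_cases hil : i ≤ l'
  · rw [glue_left _ _ _ hil, glue_right hv hn (by omega), Nat.sub_sub_self hi]
  · rw [glue_left _ _ _ (by omega : n - i ≤ l), glue_right hv.symm (by omega) (by omega)]

theorem isIncidencePath_of_lt {p : ℕ → V}
    (hp : ∀ i j, i < j → j ≤ n → Odd (i + j) → (p j ∈ closedNbhd G (p i) ↔ j = i + 1)) :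
    IsIncidencePath G p n := by
  intro i hi j hj hodd
  rcases lt_trichotomy i j with hij | rfl | hij
  · rw [hp i j hij hj hodd]
    omega
  · grind
  · rw [mem_closedNbhd_comm, hp j i hij hi (add_comm i j ▸ hodd)]
    omega

theorem IsRay.notMem_closedNbhd (H : IsRay G A B v h l) (H' : IsRay G B A v h' l') {i j : ℕ}
    (hi : i < l) (hj : j < l') (heven : Even i ∨ Even j) : h' j ∉ closedNbhd G (h i) := by
  rcases heven with heven | heven
  · rw [mem_closedNbhd_comm]
    exact fun hmem => (H'.disjoint j hj).notMem_of_mem_left hmem (H.mem_of_even i hi heven)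
  · exact fun hmem => (H.disjoint i hi).notMem_of_mem_left hmem (H'.mem_of_even j hj heven)

theorem IsRay.isIncidencePath_glue (H : IsRay G A B v h l) (H' : IsRay G B A v h' l')
    (heven : Even n) (hn : l + l' ≤ n) (hn' : n ≤ l + l' + 1) :
    IsIncidencePath G (glue h h' l n) n := by
  have hv : h l = h' l' := H.apply_last.trans H'.apply_last.symm
  refine isIncidencePath_of_lt fun i j hij hj hodd => ?_
  obtain hjl | hil | ⟨hjl, hil⟩ : j ≤ l ∨ n ≤ i + l' ∨ (l < j ∧ i + l' < n) := by omega
  · rw [glue_left _ _ _ hjl, glue_left _ _ _ (by omega : i ≤ l),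
      H.isIncidencePath i (by omega) j hjl hodd]
    omega
  · rw [glue_right hv hn hil, glue_right hv hn (by omega : n ≤ j + l'),
      H'.isIncidencePath (n - i) (by omega) (n - j) (by omega) (by grind)]
    omega
  rw [glue_left _ _ _ (by omega : i ≤ l), glue_right hv hn (by omega : n ≤ j + l')]
  obtain rfl | hil' := (show i ≤ l by omega).eq_or_lt
  · rw [H.apply_last, mem_closedNbhd_comm, H'.mem_closedNbhd_iff (n - j) (by omega)]
    grind
  obtain hnj | hnj := (show n - j ≤ l' by omega).eq_or_lt
  · rw [hnj, H'.apply_last, H.mem_closedNbhd_iff i hil'.le]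
    grind
  · exact iff_of_false (H.notMem_closedNbhd H' hil' hnj (by grind)) (by omega)

theorem IsRay.hasSimpleStart_glue (H : IsRay G A B v h l) (H' : IsRay G B A v h' l')
    (heven : Even n) (hn : l + l' ≤ n) (hn' : n ≤ l + l' + 1) :
    HasSimpleStart G (glue h h' l n) := by
  have hpos := H.pos
  have hpos' := H'.pos
  have hv : h l = h' l' := H.apply_last.trans H'.apply_last.symm
  rw [HasSimpleStart, glue_left _ _ _ (Nat.zero_le l), glue_left _ _ _ (by omega : 1 ≤ l)]
  refine ⟨H.hasSimpleStart.1, ?_⟩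
  obtain hl | rfl : 2 ≤ l ∨ l = 1 := by omega
  · rw [glue_left _ _ _ hl]
    exact H.hasSimpleStart.2
  · rw [glue_right hv hn (by omega : n ≤ 2 + l')]
    obtain hn2 | hn2 := (show n - 2 ≤ l' by omega).eq_or_lt
    · rw [hn2, hv]
      exact fun _ => rfl
    · exact fun hmem => absurd hmem (H.notMem_closedNbhd H' one_pos hn2 <|
        .inr (heven.tsub even_two))

theorem IsRay.exists_isEvenChorded (H : IsRay G A B v h l) (H' : IsRay G B A v h' l')
    (hG : Chordal G) :
    ∃ w : G.Walk (h 0) (h' 0), IsEvenChorded G w ∧ v ∈ w.support := by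
  obtain ⟨n, heven, hn, hn'⟩ : ∃ n, Even n ∧ l + l' ≤ n ∧ n ≤ l + l' + 1 := by
    rcases Nat.even_or_odd (l + l') with hpar | hpar
    exacts [⟨_, hpar, le_rfl, by omega⟩, ⟨_, hpar.add_one, by omega, le_rfl⟩]
  have hpos := H.pos
  have hpos' := H'.pos
  have hv : h l = h' l' := H.apply_last.trans H'.apply_last.symm
  have hend : HasSimpleStart G fun i => glue h h' l n (n - i) := by
    have := H'.hasSimpleStart_glue H heven (by omega) (by omega)
    simp only [HasSimpleStart] at this ⊢
    rwa [glue_sub hv hn hn' (by omega), glue_sub hv hn hn' (by omega),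
      glue_sub hv hn hn' (by omega)]
  obtain ⟨w, hw, hsupp⟩ := ((H.isIncidencePath_glue H' heven hn hn').isStutteringEvenChorded hG
    (H.hasSimpleStart_glue H' heven hn hn') hend).exists_isEvenChorded
  have hvw := hsupp l (by omega)
  rw [glue_left _ _ _ le_rfl, H.apply_last] at hvw
  have hfirst : glue h h' l n 0 = h 0 := glue_left _ _ _ (Nat.zero_le l)
  have hlast : glue h h' l n n = h' 0 := by rw [glue_right hv hn (by omega), Nat.sub_self]
  rw [← hfirst, ← hlast]
  exact ⟨w, hw, hvw⟩

end Glue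

/-! ### Crosses of closed neighbourhoods -/

section Sides

variable {G : SimpleGraph V} {y z : Set V} {a v x : V}

theorem IsMaximalCross.disjoint_closedNbhd_side (h : IsMaximalCross (nbhdHypergraph G) y z)
    (hG : IsTotallyBalanced (nbhdHypergraph G))
    (hx : x ∈ side (nbhdHypergraph G) y z) :
    Disjoint (closedNbhd G x) (side (nbhdHypergraph G) z y) := by
  by_cases hC : y ∩ z ⊆ closedNbhd G x
  · have hxz : x ∉ z := fun hxz =>
      Set.disjoint_left.mp (hG.disjoint_side h.left_mem h.right_mem) hx
        (diff_subset_side ⟨hxz, fun hxy => notMem_inter_of_mem_side hx ⟨hxy, hxz⟩⟩)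
    have hincomp : IncompRel (· ⊆ ·) z (closedNbhd G x) := by
      refine ⟨fun hsub => hxz ?_, fun hsub => hxz (hsub self_mem_closedNbhd)⟩
      obtain ⟨u, rfl⟩ := h.right_mem
      exact mem_closedNbhd_comm.mp (hsub self_mem_closedNbhd)
    exact (h.symm.disjoint_side_of_incompRel hG ⟨x, rfl⟩ hincomp (Set.inter_comm y z ▸ hC)).symm
  · exact h.disjoint_of_mem_side hG ⟨x, rfl⟩ hC self_mem_closedNbhd hx

theorem IsMaximalCross.reflTransGen_rayStep (h : IsMaximalCross (nbhdHypergraph G) y z)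
    (hG : IsTotallyBalanced (nbhdHypergraph G)) (hv : v ∈ y ∩ z)
    (ha : a ∈ side (nbhdHypergraph G) y z) :
    Relation.ReflTransGen (RayStep G (side (nbhdHypergraph G) y z)
      (side (nbhdHypergraph G) z y) v) a v := by
  obtain ⟨p, hp, hpa⟩ := ha
  induction hpa with
  | refl =>
    have hdisj := h.disjoint_left_side hG
    obtain ⟨u, rfl⟩ := h.left_mem
    exact .single ⟨diff_subset_side hp, u, .inr hdisj, hp.1, hv.1⟩
  | tail hpb hbc ih =>
    have hc := mem_side_of_linked ⟨p, hp, hpb⟩ hbc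
    obtain ⟨-, -, _, ⟨t, rfl⟩, hC, hbt, hct⟩ := hbc
    exact .head ⟨hc, t, .inr (h.disjoint_of_mem_side hG ⟨t, rfl⟩ hC hct hc), hct, hbt⟩ ih

theorem IsMaximalCross.exists_isRay_sides [Finite V] (h : IsMaximalCross (nbhdHypergraph G) y z)
    (hG : IsTotallyBalanced (nbhdHypergraph G)) (hv : v ∈ y ∩ z) :
    ∃ p l, IsRay G (side (nbhdHypergraph G) y z) (side (nbhdHypergraph G) z y) v p l := by
  obtain ⟨a, ha, hnest⟩ := h.exists_isNestPoint_mem_side hG (Set.toFinite _)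
  exact exists_isRay (fun hvside => notMem_inter_of_mem_side hvside hv)
    (fun _ => h.disjoint_closedNbhd_side hG) ha (simpleVtx_iff_isNestPoint.mpr hnest)
    (h.reflTransGen_rayStep hG hv ha)

theorem exists_isMaximalCross_of_not_simpleVtx [Finite V] (hv : ¬ SimpleVtx G v) :
    ∃ y z, IsMaximalCross (nbhdHypergraph G) y z ∧ v ∈ y ∩ z := by
  simp only [SimpleVtx] at hv
  push Not at hv
  obtain ⟨u, hu, w, hw, huw⟩ := hv
  obtain ⟨y, z, h, hsub⟩ := exists_isMaximalCross (Set.toFinite _) (Set.mem_range_self u)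
    (Set.mem_range_self w) huw
  exact ⟨y, z, h, hsub ⟨mem_closedNbhd_comm.mp hu, mem_closedNbhd_comm.mp hw⟩⟩

end Sides

theorem nonsimple_lies_on_even_chorded_path_between_simple_general {V : Type*} [Finite V]
    (G : SimpleGraph V) (hsc : StronglyChordal G) (v : V) (hv : ¬ SimpleVtx G v) :
    ∃ (a b : V) (w : G.Walk a b), IsEvenChorded G w ∧ SimpleVtx G a ∧ SimpleVtx G b ∧
      v ∈ w.support ∧ v ≠ a ∧ v ≠ b := by
  obtain ⟨y, z, hyz, hvyz⟩ := exists_isMaximalCross_of_not_simpleVtx hv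
  have hG := hsc.isTotallyBalanced_nbhdHypergraph
  obtain ⟨p, l, hp⟩ := hyz.exists_isRay_sides hG hvyz
  obtain ⟨q, m, hq⟩ := hyz.symm.exists_isRay_sides hG (Set.inter_comm y z ▸ hvyz)
  obtain ⟨w, hw, hvw⟩ := hp.exists_isEvenChorded hq hsc.1
  have ha : SimpleVtx G (p 0) := hp.hasSimpleStart.1
  have hb : SimpleVtx G (q 0) := hq.hasSimpleStart.1
  exact ⟨p 0, q 0, w, hw, ha, hb, hvw, fun h => hv (h ▸ ha), fun h => hv (h ▸ hb)⟩

/-- In a finite connected strongly chordal graph, every nonsimple vertex lies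
as an internal vertex on an even-chorded path between two simple vertices. -/
theorem nonsimple_lies_on_even_chorded_path_between_simple
    {V : Type*} [Fintype V] (G : SimpleGraph V) (hconn : G.Connected)
    (hsc : StronglyChordal G) (v : V) (hv : ¬ SimpleVtx G v) :
    ∃ (a b : V) (w : G.Walk a b), IsEvenChorded G w ∧ SimpleVtx G a ∧ SimpleVtx G b ∧
      v ∈ w.support ∧ v ≠ a ∧ v ≠ b :=
  nonsimple_lies_on_even_chorded_path_between_simple_general G hsc v hv
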